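/- arXiv:2409.02422 — 3 statements merged into one kernel-verified Lean document; each statement's English description precedes it below -/
import Mathlib

section
/- The center of the superalgebra D'(m|n) ⊗ U(gl(m|n)) equals ℂ[E] ⊗ Z(U(gl(m|n))), where E = Σ_{i∈Î} t_i∂_i. -/
set_option maxHeartbeats 1000000
set_option synthInstance.maxHeartbeats 400000

noncomputable section
open scoped TensorProduct

/-- The index set `I = {1,…,m,1̄,…,n̄}` of `gl(m|n)`; `Sum.inl` are the even
(unbarred) indices, `Sum.inr` the odd (barred) ones.  The index set
`Î = {0} ∪ I` of `gl(m+1|n)` is realized as `Ind (m+1) n`, with `0 = Sum.inl 0`. -/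
abbrev Ind (m n : ℕ) := Fin m ⊕ Fin n

/-- Parity of an index, as `0` or `1`. -/
def pI {m n : ℕ} : Ind m n → ℕ := Sum.elim (fun _ => 0) (fun _ => 1)

/-- The total order `1 < ⋯ < m < 1̄ < ⋯ < n̄` on `I` (and, with `m+1` in place of `m`,
the order `0 < 1 < ⋯ < m < 1̄ < ⋯ < n̄` on `Î`). -/
def iltI {m n : ℕ} : Ind m n → Ind m n → Prop
  | Sum.inl a, Sum.inl b => a < b
  | Sum.inl _, Sum.inr _ => True
  | Sum.inr _, Sum.inl _ => False
  | Sum.inr a, Sum.inr b => a < b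

/-- The distinguished index `0` of `Î`. -/
def z0 {m n : ℕ} : Ind (m+1) n := Sum.inl 0

/-- The inclusion `I ↪ Î`. -/
def emb {m n : ℕ} : Ind m n → Ind (m+1) n := Sum.map Fin.succ id

lemma emb_injective {m n : ℕ} : Function.Injective (emb (m := m) (n := n)) := by
  intro a b h
  cases a <;> cases b <;> simp [emb, Fin.succ_inj] at h <;> simp [h]

lemma emb_ne_z0 {m n : ℕ} (a : Ind m n) : emb a ≠ z0 := by
  cases a <;> simp [emb, z0, Fin.succ_ne_zero]

/-- Builds a linear map out of a space with basis `α` from a function on basis vectors. -/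
def mkOp {α M : Type} [AddCommGroup M] [Module ℂ M] (g : α → M) : (α →₀ ℂ) →ₗ[ℂ] M :=
  Finsupp.lsum ℂ fun x => LinearMap.toSpanSingleton ℂ M (g x)

/-- Number of odd variables occurring before position `i`. -/
def cntB {n : ℕ} (b : Fin n → Bool) (i : Fin n) : ℕ :=
  (Finset.univ.filter fun j => j < i ∧ b j = true).card

/-- Number of odd variables occurring. -/
def cntA {n : ℕ} (b : Fin n → Bool) : ℕ := (Finset.univ.filter fun j => b j = true).card


/-- The defining (super-)commutation relations of `gl`:
`e_ij e_kl − (−1)^{(|i|+|j|)(|k|+|l|)} e_kl e_ij = δ_jk e_il − (−1)^{(|i|+|j|)(|k|+|l|)} δ_li e_kj`. -/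
inductive glRel (ι : Type) (p : ι → ℕ) [DecidableEq ι] :
    FreeAlgebra ℂ (ι × ι) → FreeAlgebra ℂ (ι × ι) → Prop
  | basic (i j k l : ι) : glRel ι p
      (FreeAlgebra.ι ℂ (i, j) * FreeAlgebra.ι ℂ (k, l)
        - ((-1 : ℂ) ^ ((p i + p j) * (p k + p l))) •
            (FreeAlgebra.ι ℂ (k, l) * FreeAlgebra.ι ℂ (i, j)))
      ((if j = k then FreeAlgebra.ι ℂ (i, l) else 0)
        - ((-1 : ℂ) ^ ((p i + p j) * (p k + p l))) •
            (if l = i then FreeAlgebra.ι ℂ (k, j) else 0))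

/-- The universal enveloping superalgebra of the general linear Lie superalgebra with
index set `ι` and parity `p`, presented by generators `e_ij` and the super-commutator
relations. -/
abbrev UEA (ι : Type) (p : ι → ℕ) [DecidableEq ι] : Type := RingQuot (glRel ι p)

/-- The generator `e_ij` of `UEA ι p`. -/
def gen {ι : Type} (p : ι → ℕ) [DecidableEq ι] (i j : ι) : UEA ι p :=
  RingQuot.mkAlgHom ℂ (glRel ι p) (FreeAlgebra.ι ℂ (i, j))

/-- Monomials `t_0^{k} t^e t̄^b` of `F = ℂ[t_0^{±1},t_1,…,t_m] ⊗ Λ_n`. -/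
abbrev FMon (m n : ℕ) := ℤ × (Fin m → ℕ) × (Fin n → Bool)

/-- `F = ℂ[t_0^{±1},t_1,…,t_m] ⊗ Λ_n` as the vector space with basis the monomials. -/
abbrev FSp (m n : ℕ) : Type := FMon m n →₀ ℂ

/-- The basis monomial of `F` attached to `x`. -/
def fmono {m n : ℕ} (x : FMon m n) : FSp m n := Finsupp.single x 1

/-- Left multiplication by `t_i/t_0` for an even index `i ∈ {1,…,m}`. -/
def opDivE {m n : ℕ} (i : Fin m) : Module.End ℂ (FSp m n) :=
  mkOp fun x => fmono (x.1 - 1, Function.update x.2.1 i (x.2.1 i + 1), x.2.2)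

/-- Left multiplication by `t_ī/t_0` for an odd index `ī`. -/
def opDivO {m n : ℕ} (i : Fin n) : Module.End ℂ (FSp m n) :=
  mkOp fun x => if x.2.2 i then 0 else
    ((-1 : ℂ) ^ (cntB x.2.2 i)) • fmono (x.1 - 1, x.2.1, Function.update x.2.2 i true)

/-- The operator `t_0 ∂_0`. -/
def opPar0 {m n : ℕ} : Module.End ℂ (FSp m n) :=
  mkOp fun x => (x.1 : ℂ) • fmono x

/-- The operator `t_0 ∂_i` for an even index `i ∈ {1,…,m}`. -/
def opParE {m n : ℕ} (i : Fin m) : Module.End ℂ (FSp m n) :=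
  mkOp fun x => (x.2.1 i : ℂ) • fmono (x.1 + 1, Function.update x.2.1 i (x.2.1 i - 1), x.2.2)

/-- The operator `t_0 ∂_ī` for an odd index `ī`. -/
def opParO {m n : ℕ} (i : Fin n) : Module.End ℂ (FSp m n) :=
  mkOp fun x => if x.2.2 i then
    ((-1 : ℂ) ^ (cntB x.2.2 i)) • fmono (x.1 + 1, x.2.1, Function.update x.2.2 i false) else 0

/-- The multiplication operators `t_i/t_0`, `i ∈ I`. -/
def opDiv {m n : ℕ} : Ind m n → Module.End ℂ (FSp m n) := Sum.elim opDivE opDivO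

/-- The operators `t_0 ∂_i`, `i ∈ Î`. -/
def opPar {m n : ℕ} : Ind (m+1) n → Module.End ℂ (FSp m n) :=
  Sum.elim (Fin.cases opPar0 opParE) opParO

/-- The multiplication operators `t_i/t_0` for `i ∈ Î` (equal to `1` for `i = 0`). -/
def opDivB {m n : ℕ} : Ind (m+1) n → Module.End ℂ (FSp m n) :=
  Sum.elim (Fin.cases 1 opDivE) opDivO

/-- The generators of `D'(m|n)`. -/
def Dgens (m n : ℕ) : Set (Module.End ℂ (FSp m n)) := Set.range opDiv ∪ Set.range opPar

/-- The superalgebra `D'(m|n)` of differential operators on `F`, i.e. the subalgebra of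
operators on `F` generated by `t_i/t_0` (`i ∈ I`) and `t_0∂_i` (`i ∈ Î`). -/
def Dprime (m n : ℕ) : Subalgebra ℂ (Module.End ℂ (FSp m n)) := Algebra.adjoin ℂ (Dgens m n)

/-- `t_i/t_0` as an element of `D'(m|n)`. -/
def tdiv {m n : ℕ} (i : Ind m n) : Dprime m n :=
  ⟨opDiv i, Algebra.subset_adjoin (Or.inl ⟨i, rfl⟩)⟩

/-- `t_0∂_i` as an element of `D'(m|n)`. -/
def tpar {m n : ℕ} (i : Ind (m+1) n) : Dprime m n :=
  ⟨opPar i, Algebra.subset_adjoin (Or.inr ⟨i, rfl⟩)⟩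

/-- `t_i/t_0` for `i ∈ Î` as an element of `D'(m|n)`. -/
def tdivB {m n : ℕ} : Ind (m+1) n → Dprime m n :=
  Sum.elim (Fin.cases 1 fun i => tdiv (Sum.inl i)) fun i => tdiv (Sum.inr i)

/-- The operator `t_a∂_b = (t_a/t_0)(t_0∂_b)` of `D'(m|n)`, for `a, b ∈ Î`. -/
def tdel {m n : ℕ} (a b : Ind (m+1) n) : Dprime m n := tdivB a * tpar b

/-- The Euler operator `E = Σ_{i∈Î} t_i∂_i ∈ D'(m|n)`. -/
def En (m n : ℕ) : Dprime m n := ∑ i : Ind (m+1) n, tdel i i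

noncomputable instance instDprimeRing (m n : ℕ) : Ring (Dprime m n) :=
  @Subalgebra.toRing ℂ (Module.End ℂ (FSp m n)) inferInstance inferInstance inferInstance _

noncomputable instance instDprimeAlgebra (m n : ℕ) : Algebra ℂ (Dprime m n) :=
  @Subalgebra.algebra ℂ (Module.End ℂ (FSp m n)) inferInstance inferInstance inferInstance _

/-- The super tensor product `D'(m|n) ⊗ U(gl(m|n))`, axiomatized: an algebra `T` together
with algebra maps `d ↦ d⊗1`, `u ↦ 1⊗u`, such that the induced linear map
`D'(m|n) ⊗_ℂ U(gl(m|n)) → T` is a linear isomorphism and such that the Koszul sign rule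
`(1⊗u)(d⊗1) = (−1)^{|u||d|}(d⊗1)(1⊗u)` holds on (super-)generators. -/
structure SuperTensor (m n : ℕ) where
  T : Type
  [ringT : Ring T]
  [algT : Algebra ℂ T]
  inD : Dprime m n →ₐ[ℂ] T
  inU : UEA (Ind m n) pI →ₐ[ℂ] T
  equiv : ((Dprime m n) ⊗[ℂ] (UEA (Ind m n) pI)) ≃ₗ[ℂ] T
  equiv_tmul : ∀ (d : Dprime m n) (u : UEA (Ind m n) pI), equiv (d ⊗ₜ u) = inD d * inU u
  comm_div : ∀ (i j k : Ind m n),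
    inU (gen pI i j) * inD (tdiv k) =
      ((-1 : ℂ) ^ ((pI i + pI j) * pI k)) • (inD (tdiv k) * inU (gen pI i j))
  comm_par : ∀ (i j : Ind m n) (k : Ind (m+1) n),
    inU (gen pI i j) * inD (tpar k) =
      ((-1 : ℂ) ^ ((pI i + pI j) * pI k)) • (inD (tpar k) * inU (gen pI i j))

attribute [instance] SuperTensor.ringT SuperTensor.algT

/-- The predicate expressing that `φ : U(gl(m+1|n)) → D'(m|n) ⊗ U(gl(m|n))` is given on the
generators `e_ab` by the formulas of Theorem 3.1 (for the central element `R`). -/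
def IsPhi {m n : ℕ} (ST : SuperTensor m n) (R : ST.T)
    (φ : UEA (Ind (m+1) n) pI →ₐ[ℂ] ST.T) : Prop :=
  (∀ a b : Ind m n, φ (gen pI (emb a) (emb b)) =
      ST.inD (tdel (emb a) (emb b)) + ST.inU (gen pI a b)
        + (if a = b then ((-1 : ℂ) ^ (pI a * pI b)) • R else 0)) ∧
  (∀ a : Ind m n, φ (gen pI (emb a) z0) =
      ST.inD (tdel (emb a) z0)
        - ∑ j : Ind m n, ((-1 : ℂ) ^ (pI a * pI j)) • (ST.inD (tdiv j) * ST.inU (gen pI a j))) ∧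
  (∀ b : Ind m n, φ (gen pI z0 (emb b)) = ST.inD (tdel z0 (emb b))) ∧
  (φ (gen pI z0 z0) = ST.inD (tdel z0 z0) + R)

/-- The generating set of `U(sl(m+1|n))` inside `U(gl(m+1|n))`: the `e_ij` with `i ≠ j`
together with `e_00 − (−1)^{|a|} e_aa` for `a ∈ I`. -/
def slSet (m n : ℕ) : Set (UEA (Ind (m+1) n) pI) :=
  {x | (∃ i j : Ind (m+1) n, i ≠ j ∧ x = gen pI i j) ∨
    (∃ a : Ind m n, x = gen pI z0 z0 - ((-1 : ℂ) ^ (pI a)) • gen pI (emb a) (emb a))}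

/-- `U(sl(m+1|n))`, realized as the subalgebra of `U(gl(m+1|n))` generated by `sl(m+1|n)`. -/
def Usl (m n : ℕ) : Subalgebra ℂ (UEA (Ind (m+1) n) pI) := Algebra.adjoin ℂ (slSet m n)

lemma mem_gen_ne {m n : ℕ} {i j : Ind (m+1) n} (h : i ≠ j) : gen pI i j ∈ Usl m n :=
  Algebra.subset_adjoin (Or.inl ⟨i, j, h, rfl⟩)

lemma mem_h {m n : ℕ} (a : Ind m n) :
    gen pI z0 z0 - ((-1 : ℂ) ^ (pI a)) • gen pI (emb a) (emb a) ∈ Usl m n :=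
  Algebra.subset_adjoin (Or.inr ⟨a, rfl⟩)

/-- The predicate expressing that `ψ : U(sl(m+1|n)) → D'(m|n) ⊗ U(gl(m|n))` is given on the
generators by the formulas of Corollary 3.2 (the homomorphism `φ^s`). -/
def IsPhiS {m n : ℕ} (ST : SuperTensor m n) (ψ : Usl m n →ₐ[ℂ] ST.T) : Prop :=
  (∀ (a b : Ind m n) (h : a ≠ b),
    ψ ⟨gen pI (emb a) (emb b), mem_gen_ne fun he => h (emb_injective he)⟩ =
      ST.inD (tdel (emb a) (emb b)) + ST.inU (gen pI a b)) ∧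
  (∀ a : Ind m n, ψ ⟨gen pI (emb a) z0, mem_gen_ne (emb_ne_z0 a)⟩ =
      ST.inD (tdel (emb a) z0)
        - ∑ j : Ind m n, ((-1 : ℂ) ^ (pI a * pI j)) • (ST.inD (tdiv j) * ST.inU (gen pI a j))) ∧
  (∀ b : Ind m n, ψ ⟨gen pI z0 (emb b), mem_gen_ne (Ne.symm (emb_ne_z0 b))⟩ =
      ST.inD (tdel z0 (emb b))) ∧
  (∀ a : Ind m n, ψ ⟨gen pI z0 z0 - ((-1 : ℂ) ^ (pI a)) • gen pI (emb a) (emb a), mem_h a⟩ =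
      ST.inD (tdel (m:=m) (n:=n) z0 z0 - ((-1 : ℂ) ^ (pI a)) • tdel (emb a) (emb a))
        - ((-1 : ℂ) ^ (pI a)) • ST.inU (gen pI a a))

/-- The first Gelfand invariant `G₁ = Σ_i e_ii`. -/
def G1 (ι : Type) (p : ι → ℕ) [DecidableEq ι] [Fintype ι] : UEA ι p := ∑ i : ι, gen p i i

/-- The distinguished central element `R₁ = −(1/(m−n+1))(E⊗1 + 1⊗G₁)`. -/
def R1elt {m n : ℕ} (ST : SuperTensor m n) : ST.T :=
  -(1 / ((m : ℂ) - n + 1)) • (ST.inD (En m n) + ST.inU (G1 (Ind m n) pI))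

/-!
Let `h = ∑ |i| e_ii`. The bracket with `h` is diagonalizable on `U(gl(m|n))` with integral weights,
and an element of weight `k` has parity `k mod 2`. Hence whatever commutes with `h` is even and
commutes with the whole of `D'(m|n)`. An element of the super tensor product that commutes with
`1 ⊗ h` therefore multiplies with `D' ⊗ 1` exactly as in the ordinary tensor product, where the
center is the tensor product of the centers.

A central operator of `D'(m|n)` commutes with every `t_i ∂_i`, so it is diagonal on monomials; its
eigenvalue only depends on the total degree, since `D'(m|n)` carries `t_0 ^ k` to every monomial
of degree `k`. Any operator of `D'(m|n)` has matrix coefficients polynomial in `k` along the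
families `t_0 ^ k x`, so the eigenvalue is a polynomial in the degree, and the operator is the same
polynomial in `E`.
-/

section TensorCenter

variable {K A B T : Type*} [Field K] [Ring A] [Algebra K A] [Ring B] [Algebra K B] [Ring T]
  [Algebra K T]

open Algebra.TensorProduct in
theorem center_tensorProduct :
    Subalgebra.center K (A ⊗[K] B) =
      (Algebra.TensorProduct.map
        (Subalgebra.center K A).val (Subalgebra.center K B).val).range := by
  apply le_antisymm
  · intro y hy
    have hyA : y ∈ Subalgebra.centralizer K (includeLeft : A →ₐ[K] A ⊗[K] B).range :=
      Subalgebra.center_le_centralizer K _ hy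
    rw [Subalgebra.centralizer_coe_range_includeLeft_eq_center_tensorProduct] at hyA
    obtain ⟨y, rfl⟩ := hyA
    have hinj : Function.Injective
        (Algebra.TensorProduct.map (Subalgebra.center K A).val (AlgHom.id K B)) :=
      Module.Flat.rTensor_preserves_injective_linearMap (M := B)
        (Subalgebra.center K A).val.toLinearMap Subtype.val_injective
    have hyB : y ∈ Subalgebra.centralizer K
        (includeRight : B →ₐ[K] Subalgebra.center K A ⊗[K] B).range := by
      rintro _ ⟨b, rfl⟩
      apply hinj
      simpa using Subalgebra.mem_center_iff.mp hy (1 ⊗ₜ b)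
    rw [Subalgebra.centralizer_range_includeRight_eq_center_tensorProduct] at hyB
    obtain ⟨y, rfl⟩ := hyB
    refine ⟨y, ?_⟩
    change _ = ((Algebra.TensorProduct.map (Subalgebra.center K A).val (AlgHom.id K B)).comp
      (Algebra.TensorProduct.map (AlgHom.id K _) (Subalgebra.center K B).val)) y
    rw [← Algebra.TensorProduct.map_comp, AlgHom.comp_id, AlgHom.id_comp]
    rfl
  · rw [Algebra.TensorProduct.map_range, sup_le_iff, AlgHom.range_comp, AlgHom.range_comp,
      Subalgebra.range_val, Subalgebra.range_val]
    exact ⟨includeLeft_map_center_le K A B, includeRight_map_center_le K A B⟩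

theorem mem_center_tensorProduct_iff {y : A ⊗[K] B} :
    y ∈ Subalgebra.center K (A ⊗[K] B) ↔
      (∀ a : A, Commute (a ⊗ₜ 1) y) ∧ ∀ b : B, Commute (1 ⊗ₜ b) y := by
  rw [Subalgebra.mem_center_iff]
  refine ⟨fun hy => ⟨fun a => hy _, fun b => hy _⟩, fun ⟨hA, hB⟩ z => ?_⟩
  induction z with
  | zero => simp
  | add z w hz hw => simp only [add_mul, mul_add, hz, hw]
  | tmul a b => simpa using ((hA a).mul_left (hB b)).eq

variable {i : A →ₐ[K] T} {j : B →ₐ[K] T} {μ : A ⊗[K] B ≃ₗ[K] T}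

section
variable (hμ : ∀ a b, μ (a ⊗ₜ b) = i a * j b)
include hμ

theorem map_includeLeft_mul (a : A) (y : A ⊗[K] B) : μ ((a ⊗ₜ 1) * y) = i a * μ y := by
  induction y with
  | zero => simp
  | add y z hy hz => simp only [mul_add, map_add, hy, hz]
  | tmul a' b => simp [hμ, mul_assoc]

theorem map_mul_includeRight (b : B) (y : A ⊗[K] B) : μ (y * (1 ⊗ₜ b)) = μ y * j b := by
  induction y with
  | zero => simp
  | add y z hy hz => simp only [add_mul, map_add, hy, hz]
  | tmul a b' => simp [hμ, mul_assoc]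

theorem map_mul_includeLeft {a : A} {S : Set B}
    (ha : ∀ b ∈ Subalgebra.centralizer K S, Commute (i a) (j b)) {y : A ⊗[K] B}
    (hy : y ∈ Subalgebra.centralizer K (Algebra.TensorProduct.includeRight '' S)) :
    μ (y * (a ⊗ₜ 1)) = μ y * i a := by
  rw [Subalgebra.centralizer_coe_image_includeRight_eq_center_tensorProduct] at hy
  obtain ⟨y, rfl⟩ := hy
  simp only [AlgHom.toRingHom_eq_coe, RingHom.coe_coe]
  induction y with
  | zero => simp
  | add y z hy hz => simp only [map_add, add_mul, hy, hz]
  | tmul a' b => simp [hμ, mul_assoc, (ha b b.2).eq]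

theorem map_includeRight_mul {b : B} {S : Set A}
    (hb : ∀ a ∈ Subalgebra.centralizer K S, Commute (i a) (j b)) {y : A ⊗[K] B}
    (hy : y ∈ Subalgebra.centralizer K (Algebra.TensorProduct.includeLeft (S := K) '' S)) :
    μ ((1 ⊗ₜ b) * y) = j b * μ y := by
  rw [Subalgebra.centralizer_coe_image_includeLeft_eq_center_tensorProduct] at hy
  obtain ⟨y, rfl⟩ := hy
  simp only [AlgHom.toRingHom_eq_coe, RingHom.coe_coe]
  induction y with
  | zero => simp
  | add y z hy hz => simp only [map_add, mul_add, hy, hz]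
  | tmul a b' => simp [hμ, ← mul_assoc, (hb a a.2).eq]

theorem commute_map_includeLeft_iff {a : A} {S : Set B}
    (ha : ∀ b ∈ Subalgebra.centralizer K S, Commute (i a) (j b)) {y : A ⊗[K] B}
    (hy : y ∈ Subalgebra.centralizer K (Algebra.TensorProduct.includeRight '' S)) :
    Commute (i a) (μ y) ↔ Commute (a ⊗ₜ 1) y := by
  rw [Commute, SemiconjBy, ← map_includeLeft_mul hμ, ← map_mul_includeLeft hμ ha hy,
    μ.injective.eq_iff, Commute, SemiconjBy]

theorem commute_map_includeRight_iff {b : B} {S : Set A}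
    (hb : ∀ a ∈ Subalgebra.centralizer K S, Commute (i a) (j b)) {y : A ⊗[K] B}
    (hy : y ∈ Subalgebra.centralizer K (Algebra.TensorProduct.includeLeft (S := K) '' S)) :
    Commute (j b) (μ y) ↔ Commute (1 ⊗ₜ b) y := by
  rw [Commute, SemiconjBy, ← map_includeRight_mul hμ hb hy, ← map_mul_includeRight hμ,
    μ.injective.eq_iff, Commute, SemiconjBy]

theorem mem_center_iff_commute {t : T} :
    t ∈ Subalgebra.center K T ↔ (∀ a, Commute (i a) t) ∧ ∀ b, Commute (j b) t := by
  rw [Subalgebra.mem_center_iff]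
  refine ⟨fun ht => ⟨fun a => ht _, fun b => ht _⟩, fun ⟨hA, hB⟩ w => ?_⟩
  obtain ⟨w, rfl⟩ := μ.surjective w
  induction w with
  | zero => simp
  | add z w hz hw => simp only [map_add, add_mul, mul_add, hz, hw]
  | tmul a b => simpa [hμ] using ((hA a).mul_left (hB b)).eq

theorem map_mem_center_iff {h : B} (hh : ∀ b, Commute h b → ∀ a, Commute (i a) (j b))
    (hZ : ∀ a ∈ Subalgebra.center K A, ∀ b, Commute (i a) (j b)) {y : A ⊗[K] B} :
    μ y ∈ Subalgebra.center K T ↔ y ∈ Subalgebra.center K (A ⊗[K] B) := by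
  have comm_h : Commute (j h) (μ y) ↔
      y ∈ Subalgebra.centralizer K (Algebra.TensorProduct.includeRight '' {h}) := by
    rw [commute_map_includeRight_iff hμ (S := ∅) (fun a _ => hh h rfl a)
      (by simp [Subalgebra.mem_centralizer_iff])]
    simp [Subalgebra.mem_centralizer_iff, Commute, SemiconjBy]
  have comm_left (hy : Commute (j h) (μ y)) (a : A) : Commute (i a) (μ y) ↔ Commute (a ⊗ₜ 1) y :=
    commute_map_includeLeft_iff hμ (S := {h}) (fun b hb => hh b (hb h rfl) a) (comm_h.mp hy)
  have comm_right (hy : ∀ a : A, Commute (a ⊗ₜ[K] (1 : B)) y) (b : B) :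
      Commute (j b) (μ y) ↔ Commute (1 ⊗ₜ b) y := by
    refine commute_map_includeRight_iff hμ (S := Set.univ)
      (fun a ha => hZ a (by simpa using ha) b) ?_
    rintro _ ⟨a, -, rfl⟩
    exact hy a
  rw [mem_center_iff_commute hμ, mem_center_tensorProduct_iff]
  constructor
  · rintro ⟨hA, hB⟩
    have hA' a := (comm_left (hB h) a).mp (hA a)
    exact ⟨hA', fun b => (comm_right hA' b).mp (hB b)⟩
  · rintro ⟨hA, hB⟩
    have hB' b := (comm_right hA b).mpr (hB b)
    exact ⟨fun a => (comm_left (hB' h) a).mpr (hA a), hB'⟩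

theorem toSubmodule_center_eq_map_mul_map {h : B}
    (hh : ∀ b, Commute h b → ∀ a, Commute (i a) (j b))
    (hZ : ∀ a ∈ Subalgebra.center K A, ∀ b, Commute (i a) (j b)) :
    Subalgebra.toSubmodule (Subalgebra.center K T) =
      Subalgebra.toSubmodule ((Subalgebra.center K A).map i) *
        Subalgebra.toSubmodule ((Subalgebra.center K B).map j) := by
  have map_center : Subalgebra.toSubmodule (Subalgebra.center K T) =
      (Subalgebra.toSubmodule (Subalgebra.center K (A ⊗[K] B))).map μ.toLinearMap := by
    ext t
    obtain ⟨y, rfl⟩ := μ.surjective t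
    simp [map_mem_center_iff hμ hh hZ]
  have center_tensor : Subalgebra.toSubmodule (Subalgebra.center K (A ⊗[K] B)) =
      .map₂ (TensorProduct.mk K A B) (Subalgebra.toSubmodule (Subalgebra.center K A))
        (Subalgebra.toSubmodule (Subalgebra.center K B)) := by
    rw [center_tensorProduct, ← Submodule.range_subtype (Subalgebra.toSubmodule (.center K A)),
      ← Submodule.range_subtype (Subalgebra.toSubmodule (.center K B)), ← TensorProduct.range_map]
    rfl
  have twist : (TensorProduct.mk K A B).compr₂ μ.toLinearMap =
      (LinearMap.mul K T).compl₁₂ i.toLinearMap j.toLinearMap :=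
    LinearMap.ext₂ hμ
  rw [map_center, center_tensor, Submodule.map_map₂, twist, ← Submodule.map₂_map_map]
  exact Submodule.mul_eq_map₂.symm

end

end TensorCenter

theorem commute_map_of_adjoin_eq_top {R A T : Type*} [CommRing R] [Ring A] [Algebra R A] [Ring T]
    [Algebra R T] {f : A →ₐ[R] T} {S : Set A} {t : T} (hS : Algebra.adjoin R S = ⊤)
    (ht : ∀ s ∈ S, Commute t (f s)) (a : A) : Commute t (f a) := by
  have ha : f a ∈ Algebra.adjoin R (f '' S) := by
    rw [← AlgHom.map_adjoin, hS]
    exact ⟨a, Algebra.mem_top, rfl⟩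
  refine Algebra.commute_of_mem_adjoin_of_forall_mem_commute ha ?_
  rintro _ ⟨s, hs, rfl⟩
  exact ht s hs

section WeightSpace

variable {K B T : Type*} [Field K] [Ring B] [Algebra K B] [Ring T] [Algebra K T]

/-- The `ad h`-eigenspace of an integral weight `k`, cut down to the elements whose images under `j`
commute with `w` up to the scalar `ε ^ k`. -/
def twistedWeightSpace (j : B →ₐ[K] T) (h : B) (w : T) (ε : Kˣ) (k : ℤ) : Submodule K B :=
  Module.End.eigenspace (LinearMap.mulLeft K h - LinearMap.mulRight K h) (k : K) ⊓
    LinearMap.eqLocus ((LinearMap.mulRight K w).comp j.toLinearMap)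
      (ε ^ k • (LinearMap.mulLeft K w).comp j.toLinearMap)

variable {j : B →ₐ[K] T} {h u : B} {w : T} {ε : Kˣ} {k : ℤ}

theorem mem_twistedWeightSpace :
    u ∈ twistedWeightSpace j h w ε k ↔
      h * u - u * h = (k : K) • u ∧ j u * w = ε ^ k • (w * j u) := by
  simp [twistedWeightSpace]

instance : SetLike.GradedMonoid (twistedWeightSpace j h w ε) where
  one_mem := by simp [mem_twistedWeightSpace]
  mul_mem k l u v hu hv := by
    rw [mem_twistedWeightSpace] at *
    constructor
    · calc h * (u * v) - u * v * h = (h * u - u * h) * v + u * (h * v - v * h) := by noncomm_ring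
        _ = ((k + l : ℤ) : K) • (u * v) := by
          rw [hu.1, hv.1, smul_mul_assoc, mul_smul_comm, Int.cast_add, add_smul]
    · rw [map_mul, mul_assoc, hv.2, mul_smul_comm, ← mul_assoc, hu.2, smul_mul_assoc, smul_smul,
        mul_assoc, zpow_add, mul_comm (ε ^ k)]

theorem iSup_twistedWeightSpace_eq_top {S : Set B} (hS : Algebra.adjoin K S = ⊤)
    (hw : ∀ s ∈ S, ∃ k, s ∈ twistedWeightSpace j h w ε k) :
    ⨆ k, twistedWeightSpace j h w ε k = ⊤ := by
  have hle : Algebra.adjoin K S ≤ (DirectSum.coeAlgHom (twistedWeightSpace j h w ε)).range := by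
    refine Algebra.adjoin_le fun s hs => ?_
    obtain ⟨k, hk⟩ := hw s hs
    exact ⟨DirectSum.of _ k ⟨s, hk⟩, DirectSum.coeAlgHom_of _ k ⟨s, hk⟩⟩
  rw [hS, top_le_iff] at hle
  rw [Submodule.iSup_eq_toSubmodule_range, hle, Algebra.top_toSubmodule]

theorem commute_of_commute_of_adjoin_eq_top [CharZero K] {S : Set B}
    (hS : Algebra.adjoin K S = ⊤) (hw : ∀ s ∈ S, ∃ k, s ∈ twistedWeightSpace j h w ε k)
    (hu : Commute h u) : Commute (j u) w := by
  set ad : Module.End K B := LinearMap.mulLeft K h - LinearMap.mulRight K h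
  have indep : iSupIndep fun k : ℤ => ad.eigenspace (k : K) :=
    ad.eigenspaces_iSupIndep.comp Int.cast_injective
  have eq_eigenspace : twistedWeightSpace j h w ε 0 = ad.eigenspace ((0 : ℤ) : K) :=
    congrFun ((indep.le_iff_eq_of_iSup_eq_top (iSup_twistedWeightSpace_eq_top hS hw)).mp
      fun _ => inf_le_left) 0
  have hu0 : u ∈ twistedWeightSpace j h w ε 0 := by
    rw [eq_eigenspace]
    simpa [ad, sub_eq_zero] using hu.eq
  simpa [Commute, SemiconjBy] using (mem_twistedWeightSpace.mp hu0).2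

end WeightSpace

section UEA

theorem sum_smul_diag_mul_sub {R A ι : Type*} [CommRing R] [Ring A] [Algebra R A] [Fintype ι]
    [DecidableEq ι] (c : ι → R) {e : ι → ι → A} {k l : ι}
    (he : ∀ i, e i i * e k l - e k l * e i i =
      (if i = k then e i l else 0) - if l = i then e k i else 0) :
    (∑ i, c i • e i i) * e k l - e k l * ∑ i, c i • e i i = (c k - c l) • e k l := by
  rw [Finset.sum_mul, Finset.mul_sum, ← Finset.sum_sub_distrib]
  simp only [smul_mul_assoc, mul_smul_comm, ← smul_sub, he]
  simp [smul_sub, sub_smul]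

variable {ι : Type} [DecidableEq ι] (p : ι → ℕ)

theorem adjoin_range_gen :
    Algebra.adjoin ℂ (Set.range fun x : ι × ι => gen p x.1 x.2) = ⊤ := by
  have hrange : (Set.range fun x : ι × ι => gen p x.1 x.2) =
      RingQuot.mkAlgHom ℂ (glRel ι p) '' Set.range (FreeAlgebra.ι ℂ) :=
    Set.range_comp (RingQuot.mkAlgHom ℂ (glRel ι p)) (FreeAlgebra.ι ℂ)
  rw [hrange, ← AlgHom.map_adjoin, FreeAlgebra.adjoin_range_ι, Algebra.map_top,
    AlgHom.range_eq_top]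
  exact RingQuot.mkAlgHom_surjective ℂ _

theorem gen_mul_gen_sub (i j k l : ι) :
    gen p i j * gen p k l - (-1 : ℂ) ^ ((p i + p j) * (p k + p l)) • (gen p k l * gen p i j) =
      (if j = k then gen p i l else 0) -
        (-1 : ℂ) ^ ((p i + p j) * (p k + p l)) • if l = i then gen p k j else 0 := by
  simpa only [gen, map_sub, map_mul, map_smul, apply_ite (RingQuot.mkAlgHom ℂ (glRel ι p)),
    map_zero] using RingQuot.mkAlgHom_rel ℂ (glRel.basic (p := p) i j k l)

/-- The element `∑ p(i) e_ii` of the Cartan subalgebra: `e_kl` has weight `p k - p l` under its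
adjoint action, so that weights reduce to parities modulo `2`. -/
def gradingElt [Fintype ι] : UEA ι p := ∑ i, (p i : ℂ) • gen p i i

theorem gradingElt_mul_gen_sub [Fintype ι] (k l : ι) :
    gradingElt p * gen p k l - gen p k l * gradingElt p = ((p k : ℂ) - p l) • gen p k l := by
  refine sum_smul_diag_mul_sub _ fun i => ?_
  simpa [Even.neg_one_pow ((Even.add_self (p i)).mul_right _)] using gen_mul_gen_sub p i i k l

end UEA

theorem sum_apply_update {ι α M : Type*} [Fintype ι] [DecidableEq ι] [AddCommGroup M] (φ : α → M)
    (g : ι → α) (i : ι) (a : α) :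
    ∑ j, φ (Function.update g i a j) = ∑ j, φ (g j) - φ (g i) + φ a := by
  rw [← Finset.sum_erase_eq_sub (Finset.mem_univ i), ← Finset.sum_erase_add _ _ (Finset.mem_univ i),
    Function.update_self]
  congr 1
  refine Finset.sum_congr rfl fun j hj => ?_
  rw [Function.update_of_ne (Finset.ne_of_mem_erase hj)]

section Monomials

variable {m n : ℕ}

namespace FMon

/-- The exponents of a monomial in all the variables `t_i`, `i ∈ Î`. -/
def exponent (x : FMon m n) : Ind (m + 1) n → ℤ :=
  Sum.elim (Fin.cons x.1 fun i => x.2.1 i) fun i => (x.2.2 i).toNat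

theorem exponent_injective : Function.Injective (exponent : FMon m n → Ind (m + 1) n → ℤ) := by
  intro x y h
  refine Prod.ext (congrFun h (Sum.inl 0)) (Prod.ext (funext fun i => ?_) (funext fun i => ?_))
  · simpa [exponent] using congrFun h (Sum.inl i.succ)
  · have hi : (x.2.2 i).toNat = (y.2.2 i).toNat := Int.ofNat_inj.mp (congrFun h (Sum.inr i))
    revert hi
    cases x.2.2 i <;> cases y.2.2 i <;> simp

/-- The total degree of a monomial in the variables `t_i`, `i ∈ Î`. -/
def degree (x : FMon m n) : ℤ := ∑ i, exponent x i

theorem degree_eq (x : FMon m n) :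
    degree x = x.1 + ∑ i, (x.2.1 i : ℤ) + ∑ i, ((x.2.2 i).toNat : ℤ) := by
  simp [degree, exponent, Fin.sum_univ_succ]

theorem fst_le_degree (x : FMon m n) : x.1 ≤ degree x := by
  rw [degree_eq, add_assoc]
  exact le_add_of_nonneg_right (by positivity)

theorem degree_update_even (k l : ℤ) (e : Fin m → ℕ) (b : Fin n → Bool) (i : Fin m) (a : ℕ) :
    degree (l, Function.update e i a, b) = degree (k, e, b) + (l - k) + (a - e i) := by
  simp only [degree_eq, sum_apply_update]
  ring

theorem degree_update_odd (k l : ℤ) (e : Fin m → ℕ) (b : Fin n → Bool) (i : Fin n) (c : Bool) :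
    degree (l, e, Function.update b i c) =
      degree (k, e, b) + (l - k) + (c.toNat - (b i).toNat) := by
  simp only [degree_eq, sum_apply_update (fun c : Bool => (c.toNat : ℤ))]
  ring

/-- Multiplication by `t_0 ^ k`, on exponents. -/
def shift (k : ℤ) (x : FMon m n) : FMon m n := (x.1 + k, x.2)

theorem shift_injective (k : ℤ) : Function.Injective (shift k : FMon m n → FMon m n) := by
  rintro ⟨a, x⟩ ⟨b, y⟩ h
  simpa [shift] using h

/-- The monomial `t_0 ^ k`. -/
def t0Pow (k : ℤ) : FMon m n := (k, 0, fun _ => false)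

end FMon

end Monomials

section DifferentialOperators

open FMon
open scoped Polynomial

variable {m n : ℕ}

theorem mkOp_fmono {M : Type} [AddCommGroup M] [Module ℂ M] (g : FMon m n → M) (x : FMon m n) :
    mkOp g (fmono x) = g x := by
  simp [mkOp, fmono]

theorem end_ext_fmono {f g : Module.End ℂ (FSp m n)} (h : ∀ x, f (fmono x) = g (fmono x)) :
    f = g :=
  Finsupp.lhom_ext' fun x => LinearMap.ext_ring (h x)

theorem cntB_update_self (b : Fin n → Bool) (i : Fin n) (v : Bool) :
    cntB (Function.update b i v) i = cntB b i := by
  refine congrArg Finset.card (Finset.filter_congr fun j _ => ?_)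
  exact and_congr_right fun hj => by rw [Function.update_of_ne hj.ne]

theorem opDivE_opParE_fmono (i : Fin m) (x : FMon m n) :
    opDivE i (opParE i (fmono x)) = (x.2.1 i : ℂ) • fmono x := by
  obtain ⟨k, e, b⟩ := x
  cases he : e i with
  | zero => simp [opParE, mkOp_fmono, he]
  | succ a =>
    have hupdate : Function.update e i (a + 1) = e := by rw [← he, Function.update_eq_self]
    simp [opDivE, opParE, mkOp_fmono, he, hupdate]

theorem opDivO_opParO_fmono (i : Fin n) (x : FMon m n) :
    opDivO i (opParO i (fmono x)) = ((x.2.2 i).toNat : ℂ) • fmono x := by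
  obtain ⟨k, e, b⟩ := x
  cases hb : b i with
  | false => simp [opParO, mkOp_fmono, hb]
  | true =>
    have hupdate : Function.update b i true = b := by rw [← hb, Function.update_eq_self]
    simp [opDivO, opParO, mkOp_fmono, hb, cntB_update_self, smul_smul, ← mul_pow, hupdate]

theorem tdel_self_fmono (i : Ind (m + 1) n) (x : FMon m n) :
    (tdel i i : Module.End ℂ (FSp m n)) (fmono x) = (exponent x i : ℂ) • fmono x := by
  obtain i | i := i
  · cases i using Fin.cases with
    | zero => simp [tdel, tdivB, tpar, opPar, opPar0, mkOp_fmono, exponent]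
    | succ i => exact opDivE_opParE_fmono i x
  · exact opDivO_opParO_fmono i x

theorem En_fmono (x : FMon m n) :
    (En m n : Module.End ℂ (FSp m n)) (fmono x) = (degree x : ℂ) • fmono x := by
  simp only [En, degree, AddSubmonoidClass.coe_finsetSum, LinearMap.sum_apply, tdel_self_fmono,
    Int.cast_sum, Finset.sum_smul]

/-- An operator which, for each monomial `x`, sends the family `t_0 ^ k x`, `k ∈ ℤ`, to a family
`r(k) t_0 ^ k y` with `r` a polynomial and `y` a monomial of the same degree. -/
def IsPolynomialMonomial (f : Module.End ℂ (FSp m n)) : Prop :=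
  ∀ x : FMon m n, ∃ (r : ℂ[X]) (y : FMon m n), degree y = degree x ∧
    ∀ k : ℤ, f (fmono (shift k x)) = r.eval (k : ℂ) • fmono (shift k y)

theorem isPolynomialMonomial_opDiv (i : Ind m n) : IsPolynomialMonomial (opDiv i) := by
  rintro ⟨k₀, e, b⟩
  obtain i | i := i
  · refine ⟨1, (k₀ - 1, Function.update e i (e i + 1), b), ?_, fun k => ?_⟩
    · rw [degree_update_even k₀]
      push_cast
      ring
    · simp [opDiv, opDivE, mkOp_fmono, shift, add_sub_right_comm]
  · cases hb : b i with
    | true => exact ⟨0, (k₀, e, b), rfl, fun k => by simp [opDiv, opDivO, mkOp_fmono, shift, hb]⟩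
    | false =>
      refine ⟨Polynomial.C ((-1) ^ cntB b i), (k₀ - 1, e, Function.update b i true), ?_,
        fun k => ?_⟩
      · simp [degree_update_odd k₀, hb]
      · simp [opDiv, opDivO, mkOp_fmono, shift, hb, add_sub_right_comm]

theorem isPolynomialMonomial_opPar (i : Ind (m + 1) n) :
    IsPolynomialMonomial (opPar (m := m) i) := by
  rintro ⟨k₀, e, b⟩
  obtain i | i := i
  · cases i using Fin.cases with
    | zero =>
      refine ⟨Polynomial.C (k₀ : ℂ) + Polynomial.X, (k₀, e, b), rfl, fun k => ?_⟩
      simp [opPar, opPar0, mkOp_fmono, shift]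
    | succ i =>
      cases he : e i with
      | zero => exact ⟨0, (k₀, e, b), rfl, fun k => by simp [opPar, opParE, mkOp_fmono, shift, he]⟩
      | succ a =>
        refine ⟨Polynomial.C (a + 1 : ℂ), (k₀ + 1, Function.update e i a, b), ?_, fun k => ?_⟩
        · rw [degree_update_even k₀, he]
          push_cast
          ring
        · simp [opPar, opParE, mkOp_fmono, shift, he, add_right_comm]
  · cases hb : b i with
    | false => exact ⟨0, (k₀, e, b), rfl, fun k => by simp [opPar, opParO, mkOp_fmono, shift, hb]⟩
    | true =>
      refine ⟨Polynomial.C ((-1) ^ cntB b i), (k₀ + 1, e, Function.update b i false), ?_,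
        fun k => ?_⟩
      · simp [degree_update_odd k₀, hb]
      · simp [opPar, opParO, mkOp_fmono, shift, hb, add_right_comm]

theorem isPolynomialMonomial_of_mem_Dgens {f : Module.End ℂ (FSp m n)} (hf : f ∈ Dgens m n) :
    IsPolynomialMonomial f := by
  obtain ⟨i, rfl⟩ | ⟨i, rfl⟩ := hf
  · exact isPolynomialMonomial_opDiv i
  · exact isPolynomialMonomial_opPar i

theorem En_mem_center : En m n ∈ Subalgebra.center ℂ (Dprime m n) := by
  rw [Subalgebra.mem_center_iff]
  intro d
  refine (commute_map_of_adjoin_eq_top (f := AlgHom.id ℂ _) Algebra.adjoin_adjoin_coe_preimage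
    (fun d hd => Subtype.ext (end_ext_fmono fun x => ?_)) d).symm
  obtain ⟨r, y, hy, h⟩ := isPolynomialMonomial_of_mem_Dgens hd x
  have h0 : (d : Module.End ℂ (FSp m n)) (fmono x) = r.eval 0 • fmono y := by
    simpa [shift] using h 0
  change (En m n : Module.End ℂ (FSp m n)) ((d : Module.End ℂ (FSp m n)) (fmono x)) =
    (d : Module.End ℂ (FSp m n)) ((En m n : Module.End ℂ (FSp m n)) (fmono x))
  rw [En_fmono, map_smul, h0, map_smul, En_fmono, hy, smul_comm]

theorem exists_mem_Dprime_apply_eq_fmono {x : FMon m n} (hx : x ≠ t0Pow (degree x)) :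
    ∃ f ∈ Dprime m n, ∃ y : FMon m n, y.1 = x.1 + 1 ∧ degree y = degree x ∧
      f (fmono y) = fmono x := by
  obtain ⟨k, e, b⟩ := x
  by_cases he : e = 0
  · obtain ⟨i, hi⟩ : ∃ i, b i = true := by
      contrapose! hx
      simp [t0Pow, degree_eq, he, hx, funext_iff]
    refine ⟨(-1 : ℂ) ^ cntB b i • opDivO i, Subalgebra.smul_mem _ (tdiv (Sum.inr i)).2 _,
      (k + 1, e, Function.update b i false), rfl, ?_, ?_⟩
    · simp [degree_update_odd k, hi]
    · have hupdate : Function.update b i true = b := by rw [← hi, Function.update_eq_self]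
      simp [opDivO, mkOp_fmono, cntB_update_self, smul_smul, ← mul_pow, hupdate]
  · obtain ⟨i, hi⟩ := Function.ne_iff.mp he
    refine ⟨opDivE i, (tdiv (Sum.inl i)).2, (k + 1, Function.update e i (e i - 1), b), rfl, ?_, ?_⟩
    · rw [degree_update_even k, Nat.cast_pred (Nat.pos_of_ne_zero hi)]
      ring
    · simp [opDivE, mkOp_fmono, Nat.sub_add_cancel (Nat.pos_of_ne_zero hi)]

theorem exists_mem_Dprime_apply_t0Pow_eq (x : FMon m n) :
    ∃ f ∈ Dprime m n, f (fmono (t0Pow (degree x))) = fmono x := by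
  induction hd : (degree x - x.1).toNat using Nat.strong_induction_on generalizing x with
  | _ d ih =>
    by_cases hx : x = t0Pow (degree x)
    · exact ⟨1, one_mem _, by rw [← hx, Module.End.one_apply]⟩
    · obtain ⟨f, hf, y, hy, hdeg, hfy⟩ := exists_mem_Dprime_apply_eq_fmono hx
      have hlt : (degree y - y.1).toNat < d := by
        have := fst_le_degree y
        lia
      obtain ⟨g, hg, hgy⟩ := ih _ hlt y rfl
      exact ⟨f * g, mul_mem hf hg, by rw [← hdeg, Module.End.mul_apply, hgy, hfy]⟩

/-- The families `ℤ → F` spanned by those of the form `k ↦ r(k) t_0 ^ k x`, with `r` a polynomial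
and `x` a monomial. -/
def polynomialFamilies (m n : ℕ) : Submodule ℂ (ℤ → FSp m n) :=
  Submodule.span ℂ {v | ∃ (r : ℂ[X]) (x : FMon m n),
    v = fun k : ℤ => r.eval (k : ℂ) • fmono (shift k x)}

theorem polynomialFamilies_le_comap {f : Module.End ℂ (FSp m n)} (hf : f ∈ Dprime m n) :
    polynomialFamilies m n ≤ (polynomialFamilies m n).comap (f.compLeft ℤ) := by
  induction hf using Algebra.adjoin_induction with
  | mem f hf =>
    refine Submodule.span_le.mpr ?_
    rintro _ ⟨r, x, rfl⟩
    obtain ⟨s, y, -, h⟩ := isPolynomialMonomial_of_mem_Dgens hf x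
    refine Submodule.subset_span ⟨r * s, y, funext fun k => ?_⟩
    simp [h, smul_smul]
  | algebraMap c => exact fun v hv => Submodule.smul_mem _ c hv
  | add _ _ _ _ hf hg => exact fun v hv => (polynomialFamilies m n).add_mem (hf hv) (hg hv)
  | mul _ _ _ _ hf hg => exact fun v hv => hf (hg hv)

theorem exists_eval_eq_of_mem_polynomialFamilies {v : ℤ → FSp m n}
    (hv : v ∈ polynomialFamilies m n) (x : FMon m n) :
    ∃ q : ℂ[X], ∀ k : ℤ, v k (shift k x) = q.eval (k : ℂ) := by
  induction hv using Submodule.span_induction with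
  | mem v hv =>
    obtain ⟨r, y, rfl⟩ := hv
    refine ⟨if y = x then r else 0, fun k => ?_⟩
    split_ifs with h
    · simp [fmono, h]
    · simp [fmono, (shift_injective k).ne h]
  | zero => exact ⟨0, by simp⟩
  | add v w _ _ hv hw =>
    obtain ⟨⟨q, hq⟩, ⟨r, hr⟩⟩ := And.intro hv hw
    exact ⟨q + r, fun k => by simp [hq, hr]⟩
  | smul c v _ hv =>
    obtain ⟨q, hq⟩ := hv
    exact ⟨Polynomial.C c * q, fun k => by simp [hq]⟩

theorem exists_eval_eq_apply_t0Pow {f : Module.End ℂ (FSp m n)} (hf : f ∈ Dprime m n) :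
    ∃ q : ℂ[X], ∀ k : ℤ, f (fmono (t0Pow k)) (t0Pow k) = q.eval (k : ℂ) := by
  have mem : (fun k => fmono (t0Pow k)) ∈ polynomialFamilies m n :=
    Submodule.subset_span ⟨1, t0Pow 0, by simp [shift, t0Pow]⟩
  simpa [shift, t0Pow] using
    exists_eval_eq_of_mem_polynomialFamilies (polynomialFamilies_le_comap hf mem) (t0Pow 0)

theorem tdel_self_apply (i : Ind (m + 1) n) (v : FSp m n) (x : FMon m n) :
    (tdel i i : Module.End ℂ (FSp m n)) v x = exponent x i * v x := by
  induction v using Finsupp.induction_linear with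
  | zero => simp
  | add v w hv hw => simp [hv, hw, mul_add]
  | single y c =>
    have hsingle : Finsupp.single y c = c • fmono y := by simp [fmono]
    rw [hsingle, map_smul, tdel_self_fmono]
    obtain rfl | hy := eq_or_ne y x
    · simp [fmono, mul_comm]
    · simp [fmono, hy.symm]

theorem eq_smul_fmono_of_tdel_eq {v : FSp m n} {x : FMon m n}
    (hv : ∀ i, (tdel i i : Module.End ℂ (FSp m n)) v = (exponent x i : ℂ) • v) :
    v = v x • fmono x := by
  have support {y : FMon m n} (hy : y ≠ x) : v y = 0 := by
    obtain ⟨i, hi⟩ := Function.ne_iff.mp (exponent_injective.ne hy)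
    have h := DFunLike.congr_fun (hv i) y
    rw [tdel_self_apply, Finsupp.smul_apply, smul_eq_mul] at h
    exact (mul_eq_mul_right_iff.mp h).resolve_left (mod_cast hi)
  ext y
  obtain rfl | hy := eq_or_ne y x
  · simp [fmono]
  · simp [fmono, support hy, hy.symm]

theorem center_Dprime : Subalgebra.center ℂ (Dprime m n) = Algebra.adjoin ℂ {En m n} := by
  refine le_antisymm (fun d hd => ?_)
    (Algebra.adjoin_le (Set.singleton_subset_iff.mpr En_mem_center))
  rw [Subalgebra.mem_center_iff] at hd
  have comm {f : Module.End ℂ (FSp m n)} (hf : f ∈ Dprime m n) (v : FSp m n) :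
      f ((d : Module.End ℂ (FSp m n)) v) = (d : Module.End ℂ (FSp m n)) (f v) :=
    LinearMap.congr_fun (congrArg Subtype.val (hd ⟨f, hf⟩)) v
  have diagonal (x : FMon m n) : (d : Module.End ℂ (FSp m n)) (fmono x) =
      (d : Module.End ℂ (FSp m n)) (fmono x) x • fmono x :=
    eq_smul_fmono_of_tdel_eq fun i => by rw [comm (tdel i i).2, tdel_self_fmono, map_smul]
  obtain ⟨q, hq⟩ := exists_eval_eq_apply_t0Pow d.2
  have apply_fmono (x : FMon m n) : (d : Module.End ℂ (FSp m n)) (fmono x) =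
      q.eval (degree x : ℂ) • fmono x := by
    obtain ⟨f, hf, hfx⟩ := exists_mem_Dprime_apply_t0Pow_eq x
    rw [← hfx, ← comm hf, diagonal, hq, map_smul]
  rw [Algebra.adjoin_singleton_eq_range_aeval]
  refine ⟨q, Subtype.ext (end_ext_fmono fun x => ?_)⟩
  rw [apply_fmono, ← Module.End.aeval_apply_of_mem_apply_eq_smul (En_fmono x)]
  exact LinearMap.congr_fun (Polynomial.aeval_algHom_apply (Dprime m n).val (En m n) q).symm _

theorem toSubmodule_map_center_Dprime {T : Type*} [Ring T] [Algebra ℂ T]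
    (f : Dprime m n →ₐ[ℂ] T) :
    Subalgebra.toSubmodule ((Subalgebra.center ℂ (Dprime m n)).map f) =
      Submodule.span ℂ (Set.range fun k : ℕ => f (En m n ^ k)) := by
  rw [center_Dprime, AlgHom.map_adjoin_singleton, Algebra.adjoin_eq_span,
    ← Submonoid.powers_eq_closure, Submonoid.coe_powers]
  simp only [map_pow]

end DifferentialOperators

section SuperTensor

variable {m n : ℕ}

theorem neg_one_pow_zpow_parity_sub (p : ℕ) (i j : Ind m n) :
    (((-1 : ℂˣ) ^ p) ^ ((pI i : ℤ) - pI j) : ℂˣ) = (-1 : ℂˣ) ^ ((pI i + pI j) * p) := by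
  rcases i with i | i <;> rcases j with j | j <;>
    simp [pI, pow_mul, ← inv_pow]

namespace SuperTensor

variable (ST : SuperTensor m n)

theorem gen_mem_twistedWeightSpace {d : Dprime m n}
    (hd : (d : Module.End ℂ (FSp m n)) ∈ Dgens m n) :
    ∃ ε, ∀ i j, gen pI i j ∈
      twistedWeightSpace ST.inU (gradingElt pI) (ST.inD d) ε ((pI i : ℤ) - pI j) := by
  have mem (p : ℕ) (i j : Ind m n) (hcomm : ST.inU (gen pI i j) * ST.inD d =
        (-1 : ℂ) ^ ((pI i + pI j) * p) • (ST.inD d * ST.inU (gen pI i j))) :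
      gen pI i j ∈ twistedWeightSpace ST.inU (gradingElt pI) (ST.inD d) ((-1) ^ p)
        ((pI i : ℤ) - pI j) := by
    rw [mem_twistedWeightSpace, gradingElt_mul_gen_sub, hcomm, neg_one_pow_zpow_parity_sub]
    simp [Units.smul_def]
  obtain ⟨d, _⟩ := d
  obtain ⟨k, rfl⟩ | ⟨k, rfl⟩ := hd
  · exact ⟨_, fun i j => mem _ i j (ST.comm_div i j k)⟩
  · exact ⟨_, fun i j => mem _ i j (ST.comm_par i j k)⟩

theorem commute_inD_inU_of_commute_gradingElt {u : UEA (Ind m n) pI}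
    (hu : Commute (gradingElt pI) u) (d : Dprime m n) : Commute (ST.inD d) (ST.inU u) := by
  refine (commute_map_of_adjoin_eq_top Algebra.adjoin_adjoin_coe_preimage (fun d hd => ?_) d).symm
  obtain ⟨ε, hε⟩ := ST.gen_mem_twistedWeightSpace hd
  refine commute_of_commute_of_adjoin_eq_top (ε := ε) (adjoin_range_gen pI) ?_ hu
  rintro _ ⟨⟨i, j⟩, rfl⟩
  exact ⟨_, hε i j⟩

theorem inU_gen_mul_inD_tdivB (i j : Ind m n) (k : Ind (m + 1) n) :
    ST.inU (gen pI i j) * ST.inD (tdivB k) =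
      (-1 : ℂ) ^ ((pI i + pI j) * pI k) • (ST.inD (tdivB k) * ST.inU (gen pI i j)) := by
  obtain k | k := k
  · cases k using Fin.cases with
    | zero => simp [tdivB, pI]
    | succ k => exact ST.comm_div i j (Sum.inl k)
  · exact ST.comm_div i j (Sum.inr k)

theorem commute_inD_tdel_self_inU_gen (i j : Ind m n) (k : Ind (m + 1) n) :
    Commute (ST.inD (tdel k k)) (ST.inU (gen pI i j)) := by
  refine Eq.symm ?_
  rw [tdel, map_mul, ← mul_assoc, inU_gen_mul_inD_tdivB, smul_mul_assoc, mul_assoc, ST.comm_par,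
    mul_smul_comm, smul_smul, ← pow_add, Even.neg_one_pow (Even.add_self _), one_smul, mul_assoc]

theorem commute_inD_En_inU (u : UEA (Ind m n) pI) : Commute (ST.inD (En m n)) (ST.inU u) := by
  refine commute_map_of_adjoin_eq_top (adjoin_range_gen pI) ?_ u
  rintro _ ⟨⟨i, j⟩, rfl⟩
  rw [En, map_sum]
  exact Commute.sum_left _ _ _ fun k _ => ST.commute_inD_tdel_self_inU_gen i j k

theorem commute_inD_inU_of_mem_center {d : Dprime m n}
    (hd : d ∈ Subalgebra.center ℂ (Dprime m n)) (u : UEA (Ind m n) pI) :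
    Commute (ST.inD d) (ST.inU u) := by
  rw [center_Dprime] at hd
  have hd' : ST.inD d ∈ Algebra.adjoin ℂ {ST.inD (En m n)} := by
    rw [← AlgHom.map_adjoin_singleton]
    exact ⟨d, hd, rfl⟩
  exact (Algebra.commute_of_mem_adjoin_singleton_of_commute hd'
    (ST.commute_inD_En_inU u).symm).symm

end SuperTensor

end SuperTensor

/-- The center of the superalgebra `D'(m|n) ⊗ U(gl(m|n))` equals
`ℂ[E] ⊗ Z(U(gl(m|n)))`, i.e. the span of the elements `E^k ⊗ z` with `z` central. -/
theorem stmt1 (m n : ℕ) (ST : SuperTensor m n) (x : ST.T) :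
    x ∈ Subalgebra.center ℂ ST.T ↔
      x ∈ Submodule.span ℂ {y : ST.T | ∃ (k : ℕ) (z : UEA (Ind m n) pI),
        z ∈ Subalgebra.center ℂ (UEA (Ind m n) pI) ∧ y = ST.inD (En m n ^ k) * ST.inU z} := by
  have center_eq := toSubmodule_center_eq_map_mul_map ST.equiv_tmul
    (fun _ hu d => ST.commute_inD_inU_of_commute_gradingElt hu d)
    (fun _ hd u => ST.commute_inD_inU_of_mem_center hd u)
  have map_center_UEA :
      Subalgebra.toSubmodule ((Subalgebra.center ℂ (UEA (Ind m n) pI)).map ST.inU) =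
        Submodule.span ℂ (ST.inU '' Subalgebra.center ℂ (UEA (Ind m n) pI)) :=
    (Submodule.span_eq _).symm
  rw [toSubmodule_map_center_Dprime, map_center_UEA, Submodule.span_mul_span] at center_eq
  rw [← Subalgebra.mem_toSubmodule, center_eq]
  congr! 2
  ext y
  constructor
  · rintro ⟨_, ⟨k, rfl⟩, _, ⟨z, hz, rfl⟩, rfl⟩
    exact ⟨k, z, hz, rfl⟩
  · rintro ⟨k, z, hz, rfl⟩
    exact Set.mul_mem_mul ⟨k, rfl⟩ ⟨z, hz, rfl⟩
end
end

section
/- Assume m+1 ≠ n and set R_1 = −(1/(m−n+1))(E⊗1 + 1⊗G_1^{gl(m|n)}). Then π^g∘ι^s = Id on U(sl(m+1|n)), and φ^s∘π^g = φ_{R_1} as homomorphisms U(gl(m+1|n)) → D'(m|n)⊗U(gl(m|n)). -/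
set_option maxHeartbeats 1000000
set_option synthInstance.maxHeartbeats 400000

noncomputable section
open scoped TensorProduct

/-!
As `m + 1 ≠ n`, the first Gelfand invariant `G₁` of `gl(m+1|n)` has nonzero supertrace `m + 1 - n`
and `gl(m+1|n) = sl(m+1|n) ⊕ ℂ G₁`. The map `π^g` is the projection along `G₁`, so it fixes
`sl(m+1|n)`, and `φ ∘ π^g = φ` for every homomorphism `φ` killing `G₁`. Every `φ_R` restricts to
`φ^s`, while `φ_R(G₁) = E ⊗ 1 + 1 ⊗ G₁ + (m + 1 - n) R`; hence `R₁` is exactly the value of `R` for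
which `φ_R` kills `G₁`, and then `φ^s ∘ π^g = φ_R ∘ π^g = φ_R`.
-/

lemma neg_one_pow_mul_self {M : Type*} [Monoid M] [HasDistribNeg M] (k : ℕ) :
    (-1 : M) ^ k * (-1) ^ k = 1 :=
  pow_mul_pow_eq_one k <| by rw [neg_one_mul, neg_neg]

section Indices

variable {m n : ℕ}

lemma pI_z0 : pI (z0 : Ind (m + 1) n) = 0 := rfl

lemma pI_emb (a : Ind m n) : pI (emb a) = pI a := by
  cases a <;> rfl

lemma pI_mul_pI_self (a : Ind m n) : pI a * pI a = pI a := by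
  cases a <;> rfl

lemma sum_neg_one_pow_pI (m n : ℕ) : ∑ a : Ind m n, (-1 : ℂ) ^ pI a = m - n := by
  simp [pI, sub_eq_add_neg]

lemma eq_z0_or_exists_emb_eq (i : Ind (m + 1) n) : i = z0 ∨ ∃ a, emb a = i := by
  rcases i with i | i
  · exact i.cases (Or.inl rfl) fun a => Or.inr ⟨Sum.inl a, rfl⟩
  · exact Or.inr ⟨Sum.inr i, rfl⟩

lemma sum_eq_z0_add_sum_emb {M : Type*} [AddCommMonoid M] (f : Ind (m + 1) n → M) :
    ∑ i, f i = f z0 + ∑ a : Ind m n, f (emb a) := by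
  simp only [Fintype.sum_sum_type, Fin.sum_univ_succ, emb, z0, Sum.map_inl, Sum.map_inr, id,
    add_assoc]

end Indices

section EnvelopingAlgebra

variable {ι : Type} {p : ι → ℕ} [DecidableEq ι]

lemma UEA.algHom_ext {A : Type*} [Semiring A] [Algebra ℂ A] {f g : UEA ι p →ₐ[ℂ] A}
    (h : ∀ i j, f (gen p i j) = g (gen p i j)) : f = g :=
  RingQuot.ringQuot_ext' _ _ _ <| FreeAlgebra.hom_ext <| funext fun x => h x.1 x.2

lemma UEA.comp_eq_of_map_eq_zero {A : Type*} [Ring A] [Algebra ℂ A] {π : UEA ι p →ₐ[ℂ] UEA ι p}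
    {c : ι → ι → ℂ} {z : UEA ι p} (hπ : ∀ i j, π (gen p i j) = gen p i j - c i j • z)
    {φ : UEA ι p →ₐ[ℂ] A} (hz : φ z = 0) : φ.comp π = φ :=
  UEA.algHom_ext fun i j => by
    rw [AlgHom.comp_apply, hπ, map_sub, map_smul, hz, smul_zero, sub_zero]

/-- The supertrace of the matrix unit `e_ij`, for indices of parity `p`; the map `π^g` subtracts
from `e_ij` this multiple of `G₁ / (m + 1 - n)`. -/
def supertrace (p : ι → ℕ) (i j : ι) : ℂ := if i = j then (-1) ^ p i else 0

lemma supertrace_self (i : ι) : supertrace p i i = (-1) ^ p i := if_pos rfl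

lemma supertrace_of_ne {i j : ι} (h : i ≠ j) : supertrace p i j = 0 := if_neg h

end EnvelopingAlgebra

section SpecialLinear

variable {m n : ℕ}

lemma Usl.algHom_ext {A : Type*} [Semiring A] [Algebra ℂ A] {f g : Usl m n →ₐ[ℂ] A}
    (h_ne : ∀ (i j : Ind (m + 1) n) (h : i ≠ j),
      f ⟨gen pI i j, mem_gen_ne h⟩ = g ⟨gen pI i j, mem_gen_ne h⟩)
    (h_diag : ∀ a : Ind m n,
      f ⟨gen pI z0 z0 - ((-1 : ℂ) ^ pI a) • gen pI (emb a) (emb a), mem_h a⟩ =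
        g ⟨gen pI z0 z0 - ((-1 : ℂ) ^ pI a) • gen pI (emb a) (emb a), mem_h a⟩) :
    f = g := by
  refine AlgHom.adjoin_ext ?_
  rintro _ (⟨i, j, hij, rfl⟩ | ⟨a, rfl⟩)
  exacts [h_ne i j hij, h_diag a]

lemma Usl.comp_val_of_supertrace_shift {z : UEA (Ind (m + 1) n) pI}
    {π : UEA (Ind (m + 1) n) pI →ₐ[ℂ] UEA (Ind (m + 1) n) pI}
    (hπ : ∀ i j, π (gen pI i j) = gen pI i j - supertrace pI i j • z) :
    π.comp (Usl m n).val = (Usl m n).val := by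
  refine Usl.algHom_ext (fun i j hij => ?_) fun a => ?_
  · simp only [AlgHom.comp_apply, Subalgebra.coe_val]
    rw [hπ, supertrace_of_ne hij, zero_smul, sub_zero]
  · simp only [AlgHom.comp_apply, Subalgebra.coe_val]
    rw [map_sub, map_smul, hπ, hπ, supertrace_self, supertrace_self, pI_z0, pI_emb, pow_zero,
      one_smul, smul_sub, smul_smul, neg_one_pow_mul_self, one_smul, sub_sub_sub_cancel_right]

end SpecialLinear

section Phi

variable {m n : ℕ} {ST : SuperTensor m n} {R : ST.T} {φ : UEA (Ind (m + 1) n) pI →ₐ[ℂ] ST.T}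

lemma IsPhi.map_gen_emb_self (hφ : IsPhi ST R φ) (a : Ind m n) :
    φ (gen pI (emb a) (emb a)) =
      ST.inD (tdel (emb a) (emb a)) + ST.inU (gen pI a a) + (-1 : ℂ) ^ pI a • R := by
  rw [hφ.1, if_pos rfl, pI_mul_pI_self]

lemma IsPhi.comp_val_eq (hφ : IsPhi ST R φ) {ψ : Usl m n →ₐ[ℂ] ST.T} (hψ : IsPhiS ST ψ) :
    φ.comp (Usl m n).val = ψ := by
  have hφ_diag := hφ.map_gen_emb_self
  obtain ⟨hφ_emb_emb, hφ_emb_z0, hφ_z0_emb, hφ_z0_z0⟩ := hφ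
  obtain ⟨hψ_emb_emb, hψ_emb_z0, hψ_z0_emb, hψ_diag⟩ := hψ
  refine Usl.algHom_ext (fun i j hij => ?_) fun a => ?_
  · simp only [AlgHom.comp_apply, Subalgebra.coe_val]
    rcases eq_z0_or_exists_emb_eq i with rfl | ⟨a, rfl⟩ <;>
      rcases eq_z0_or_exists_emb_eq j with rfl | ⟨b, rfl⟩
    · exact absurd rfl hij
    · rw [hφ_z0_emb, hψ_z0_emb]
    · rw [hφ_emb_z0, hψ_emb_z0]
    · have hab : a ≠ b := ne_of_apply_ne emb hij
      rw [hφ_emb_emb, hψ_emb_emb a b hab, if_neg hab, add_zero]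
  · simp only [AlgHom.comp_apply, Subalgebra.coe_val]
    rw [hψ_diag, map_sub, map_smul, hφ_z0_z0, hφ_diag, map_sub, map_smul, smul_add, smul_add,
      smul_smul, neg_one_pow_mul_self, one_smul]
    abel

lemma IsPhi.map_G1 (hφ : IsPhi ST R φ) :
    φ (G1 (Ind (m + 1) n) pI) =
      ST.inD (En m n) + ST.inU (G1 (Ind m n) pI) + ((m : ℂ) + 1 - n) • R := by
  have sum_signs : (m : ℂ) + 1 - n = 1 + ∑ a : Ind m n, (-1 : ℂ) ^ pI a := by
    rw [sum_neg_one_pow_pI]; ring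
  simp only [sum_signs, G1, En, map_add, map_sum, sum_eq_z0_add_sum_emb, hφ.2.2.2,
    hφ.map_gen_emb_self, Finset.sum_add_distrib, ← Finset.sum_smul, add_smul, one_smul]
  abel

lemma smul_R1elt (ST : SuperTensor m n) (h : (m : ℂ) + 1 - n ≠ 0) :
    ((m : ℂ) + 1 - n) • R1elt ST = -(ST.inD (En m n) + ST.inU (G1 (Ind m n) pI)) := by
  rw [R1elt, sub_add_eq_add_sub, neg_smul, smul_neg, smul_smul, mul_one_div_cancel h, one_smul]

lemma IsPhi.map_G1_eq_zero (hφ : IsPhi ST (R1elt ST) φ) (hmn : m + 1 ≠ n) :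
    φ (G1 (Ind (m + 1) n) pI) = 0 := by
  have h : (m : ℂ) + 1 - n ≠ 0 := sub_ne_zero.2 <| mod_cast hmn
  rw [hφ.map_G1, smul_R1elt ST h, add_neg_cancel]

end Phi

/-- Proposition 3.3.  Assume `m+1 ≠ n` and let
`R₁ = −(1/(m−n+1))(E⊗1 + 1⊗G₁^{gl(m|n)})`.  Then `π^g ∘ ι^s = Id` on `U(sl(m+1|n))` and
`φ^s ∘ π^g = φ_{R₁}` on `U(gl(m+1|n))`. -/
theorem stmt4 (m n : ℕ) (hmn : m + 1 ≠ n) (ST : SuperTensor m n)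
    (πg : UEA (Ind (m+1) n) pI →ₐ[ℂ] Usl m n)
    (hπ : ∀ i j : Ind (m+1) n, (πg (gen pI i j) : UEA (Ind (m+1) n) pI) =
      gen pI i j - (if i = j then
        (((-1 : ℂ) ^ (pI i)) / ((m : ℂ) + 1 - n)) • G1 (Ind (m+1) n) pI else 0))
    (ψ : Usl m n →ₐ[ℂ] ST.T) (hψ : IsPhiS ST ψ)
    (φ : UEA (Ind (m+1) n) pI →ₐ[ℂ] ST.T) (hφ : IsPhi ST (R1elt ST) φ) :
    (∀ x : Usl m n, πg (x : UEA (Ind (m+1) n) pI) = x) ∧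
    (∀ x : UEA (Ind (m+1) n) pI, ψ (πg x) = φ x) := by
  have hπ_val (i j : Ind (m + 1) n) : (Usl m n).val.comp πg (gen pI i j) =
      gen pI i j - supertrace pI i j • (1 / ((m : ℂ) + 1 - n)) • G1 (Ind (m + 1) n) pI := by
    simp only [AlgHom.comp_apply, Subalgebra.coe_val, hπ, supertrace, smul_smul,
      mul_one_div, ite_div, zero_div, ite_smul, zero_smul]
  have h_kill : φ ((1 / ((m : ℂ) + 1 - n)) • G1 (Ind (m + 1) n) pI) = 0 := by
    rw [map_smul, hφ.map_G1_eq_zero hmn, smul_zero]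
  have h_id : ((Usl m n).val.comp πg).comp (Usl m n).val = (Usl m n).val :=
    Usl.comp_val_of_supertrace_shift hπ_val
  have h_absorb : φ.comp ((Usl m n).val.comp πg) = φ :=
    UEA.comp_eq_of_map_eq_zero hπ_val h_kill
  refine ⟨fun x => Subtype.ext (DFunLike.congr_fun h_id x), fun x => ?_⟩
  calc ψ (πg x) = φ (πg x) := (DFunLike.congr_fun (hφ.comp_val_eq hψ) (πg x)).symm
    _ = φ x := DFunLike.congr_fun h_absorb x
end
end

section
/- The vector t_0^a ⊗ v_λ is a highest weight vector of the U(gl(m+1|n))-module F_a ⊗ L(λ) (i.e. it is annihilated by e_{ij} for all i<j in Î), and it is the only highest weight vector of F_a ⊗ L(λ) up to scaling. -/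
set_option maxHeartbeats 1000000
set_option synthInstance.maxHeartbeats 400000

noncomputable section
open scoped TensorProduct

/-- Monomials of the `D'(m|n)`-module `F_a`: such a monomial
`t_0^{a−k_1−⋯−k_{n̄}} t_1^{k_1}⋯t_m^{k_m} t_{1̄}^{k_{1̄}}⋯t_{n̄}^{k_{n̄}}` is determined by the
exponents `(k_1,…,k_m,k_{1̄},…,k_{n̄})`. -/
abbrev FaMon (m n : ℕ) := (Fin m → ℕ) × (Fin n → Bool)

/-- The module `F_a`, as the vector space with basis its monomials. -/
abbrev FaSp (m n : ℕ) : Type := FaMon m n →₀ ℂ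

/-- A basis monomial of `F_a`. -/
def amono {m n : ℕ} (x : FaMon m n) : FaSp m n := Finsupp.single x 1

/-- The parity of a monomial of `F_a`. -/
def parM {m n : ℕ} (x : FaMon m n) : ℕ := cntA x.2

/-- The monomial `t_0^a` of `F_a`. -/
def hwMon (m n : ℕ) : FaMon m n := (fun _ => 0, fun _ => false)

/-- Multiplication by `t_i/t_0` on `F_a`, even `i`. -/
def aDivE {m n : ℕ} (i : Fin m) : Module.End ℂ (FaSp m n) :=
  mkOp fun x => amono (Function.update x.1 i (x.1 i + 1), x.2)

/-- Multiplication by `t_ī/t_0` on `F_a`, odd `ī`. -/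
def aDivO {m n : ℕ} (i : Fin n) : Module.End ℂ (FaSp m n) :=
  mkOp fun x => if x.2 i then 0 else
    ((-1 : ℂ) ^ (cntB x.2 i)) • amono (x.1, Function.update x.2 i true)

/-- The operator `t_0∂_0` on `F_a` (the exponent of `t_0` is `a` minus the total degree of the
other variables). -/
def aPar0 {m n : ℕ} (a : ℂ) : Module.End ℂ (FaSp m n) :=
  mkOp fun x => (a - (∑ i, (x.1 i : ℂ)) - (cntA x.2 : ℂ)) • amono x

/-- The operator `t_0∂_i` on `F_a`, even `i`. -/
def aParE {m n : ℕ} (i : Fin m) : Module.End ℂ (FaSp m n) :=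
  mkOp fun x => (x.1 i : ℂ) • amono (Function.update x.1 i (x.1 i - 1), x.2)

/-- The operator `t_0∂_ī` on `F_a`, odd `ī`. -/
def aParO {m n : ℕ} (i : Fin n) : Module.End ℂ (FaSp m n) :=
  mkOp fun x => if x.2 i then
    ((-1 : ℂ) ^ (cntB x.2 i)) • amono (x.1, Function.update x.2 i false) else 0

/-- `t_i/t_0` on `F_a` for `i ∈ I`. -/
def aDiv {m n : ℕ} : Ind m n → Module.End ℂ (FaSp m n) := Sum.elim aDivE aDivO

/-- `t_0∂_i` on `F_a` for `i ∈ Î`. -/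
def aParB {m n : ℕ} (a : ℂ) : Ind (m+1) n → Module.End ℂ (FaSp m n) :=
  Sum.elim (Fin.cases (aPar0 a) aParE) aParO

/-- `t_i/t_0` on `F_a` for `i ∈ Î`. -/
def aDivB {m n : ℕ} : Ind (m+1) n → Module.End ℂ (FaSp m n) :=
  Sum.elim (Fin.cases 1 aDivE) aDivO

/-- The operator `t_i∂_j` on `F_a`, `i, j ∈ Î`. -/
def aTD {m n : ℕ} (a : ℂ) (i j : Ind (m+1) n) : Module.End ℂ (FaSp m n) :=
  aDivB i * aParB a j

/-- The simple highest weight module `L(λ)` over `U(gl(m|n))`: a simple module with a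
(nonzero) highest weight vector of weight `λ`. -/
structure SimpleHW (m n : ℕ) (lam : Ind m n → ℂ) where
  L : Type
  [acg : AddCommGroup L]
  [mod : Module ℂ L]
  ρ : UEA (Ind m n) pI →ₐ[ℂ] Module.End ℂ L
  v : L
  v_ne : v ≠ 0
  hw : ∀ i j : Ind m n, iltI i j → ρ (gen pI i j) v = 0
  hwt : ∀ i : Ind m n, ρ (gen pI i i) v = lam i • v
  simple : ∀ N : Submodule ℂ L, (∀ u x, x ∈ N → ρ u x ∈ N) → N = ⊥ ∨ N = ⊤

attribute [instance] SimpleHW.acg SimpleHW.mod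

/-- The Verma module `M(λ)` over `U(gl(m|n))`: a module generated by a highest weight vector
of weight `λ` which is universal among such. -/
structure VermaM (m n : ℕ) (lam : Ind m n → ℂ) where
  L : Type
  [acg : AddCommGroup L]
  [mod : Module ℂ L]
  ρ : UEA (Ind m n) pI →ₐ[ℂ] Module.End ℂ L
  v : L
  v_ne : v ≠ 0
  hw : ∀ i j : Ind m n, iltI i j → ρ (gen pI i j) v = 0
  hwt : ∀ i : Ind m n, ρ (gen pI i i) v = lam i • v
  gens : ∀ N : Submodule ℂ L, (∀ u x, x ∈ N → ρ u x ∈ N) → v ∈ N → N = ⊤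
  univ : ∀ (W : Type) [AddCommGroup W] [Module ℂ W]
      (ρW : UEA (Ind m n) pI →ₐ[ℂ] Module.End ℂ W) (w : W),
      (∀ i j : Ind m n, iltI i j → ρW (gen pI i j) w = 0) →
      (∀ i : Ind m n, ρW (gen pI i i) w = lam i • w) →
      ∃ g : L →ₗ[ℂ] W, g v = w ∧ ∀ u x, g (ρ u x) = ρW u (g x)

attribute [instance] VermaM.acg VermaM.mod

/-- The predicate expressing that `Θ` is the representation of `U(gl(m+1|n))` on
`F_a ⊗ L` obtained via `φ_R` from a representation `ρ` of `U(gl(m|n))` on `L`, where the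
central element `R` acts by the scalar `r`; the formulas for the action of the generators on
pure tensors (with the appropriate Koszul signs) are written out explicitly. -/
def IsTensorRep {m n : ℕ} (a r : ℂ) {L : Type} [AddCommGroup L] [Module ℂ L]
    (ρ : UEA (Ind m n) pI →ₐ[ℂ] Module.End ℂ L)
    (Θ : UEA (Ind (m+1) n) pI →ₐ[ℂ] Module.End ℂ (FaSp m n ⊗[ℂ] L)) : Prop :=
  (∀ (c d : Ind m n) (x : FaMon m n) (v : L),
    Θ (gen pI (emb c) (emb d)) (amono x ⊗ₜ[ℂ] v) =
      (aTD a (emb c) (emb d)) (amono x) ⊗ₜ[ℂ] v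
      + ((-1 : ℂ) ^ ((pI c + pI d) * parM x)) • (amono x ⊗ₜ[ℂ] (ρ (gen pI c d) v))
      + (if c = d then (((-1 : ℂ) ^ (pI c * pI d)) * r) • (amono x ⊗ₜ[ℂ] v) else 0)) ∧
  (∀ (c : Ind m n) (x : FaMon m n) (v : L),
    Θ (gen pI (emb c) z0) (amono x ⊗ₜ[ℂ] v) =
      (aTD a (emb c) z0) (amono x) ⊗ₜ[ℂ] v
      - ∑ j : Ind m n, (((-1 : ℂ) ^ (pI c * pI j)) * ((-1 : ℂ) ^ ((pI c + pI j) * parM x))) •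
          ((aDiv j (amono x)) ⊗ₜ[ℂ] (ρ (gen pI c j) v))) ∧
  (∀ (d : Ind m n) (x : FaMon m n) (v : L),
    Θ (gen pI z0 (emb d)) (amono x ⊗ₜ[ℂ] v) = (aTD a z0 (emb d)) (amono x) ⊗ₜ[ℂ] v) ∧
  (∀ (x : FaMon m n) (v : L),
    Θ (gen pI z0 z0) (amono x ⊗ₜ[ℂ] v) =
      (aTD a z0 z0) (amono x) ⊗ₜ[ℂ] v + r • (amono x ⊗ₜ[ℂ] v))

/-- The shifted weight `λ̃ = (a+r, λ_1+r, …, λ_m+r, λ_{1̄}−r, …, λ_{n̄}−r)`. -/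
def lamTilde {m n : ℕ} (a r : ℂ) (lam : Ind m n → ℂ) : Ind (m+1) n → ℂ :=
  Sum.elim (Fin.cases (a + r) fun k => lam (Sum.inl k) + r) fun k => lam (Sum.inr k) - r

/-- The Weyl vector `ρ_{m|n} = (m, m−1, …, 1, −1, −2, …, −n)`. -/
def rhoS {m n : ℕ} : Ind m n → ℂ := Sum.elim (fun k => (m : ℂ) - k) fun k => -(k : ℂ) - 1

/-- Antidominance of a weight of `gl(m|n)`:
`⟨λ+ρ, α^∨⟩ ∉ ℤ_{>0}` for all positive even roots `α`. -/
def Antidom {m n : ℕ} (lam : Ind m n → ℂ) : Prop :=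
  (∀ i j : Fin m, i < j → ¬∃ N : ℕ,
    (lam (Sum.inl i) + rhoS (m:=m) (n:=n) (Sum.inl i)) - (lam (Sum.inl j) + rhoS (m:=m) (n:=n) (Sum.inl j)) = (N : ℂ) + 1) ∧
  (∀ i j : Fin n, i < j → ¬∃ N : ℕ,
    (lam (Sum.inr i) + rhoS (m:=m) (n:=n) (Sum.inr i)) - (lam (Sum.inr j) + rhoS (m:=m) (n:=n) (Sum.inr j)) = (N : ℂ) + 1)

/-- Typicality of a weight of `gl(m|n)`:
`(λ+ρ, α) ≠ 0` for all positive odd isotropic roots `α = δ_i − ε_j`. -/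
def Typical {m n : ℕ} (lam : Ind m n → ℂ) : Prop :=
  ∀ (i : Fin m) (j : Fin n),
    (lam (Sum.inl i) + rhoS (m:=m) (n:=n) (Sum.inl i)) + (lam (Sum.inr j) + rhoS (m:=m) (n:=n) (Sum.inr j)) ≠ 0

/-!
Two facts combine. First, since `e_{0d}` acts as `t_0∂_d ⊗ 1`, a vector killed by all `e_{0d}`,
`d ∈ I`, has no component along a monomial other than `t_0^a`, hence is `t_0^a ⊗ u`; the remaining
raising operators `e_{cd}` then act through `u` alone, so `u` is a singular vector of `L(λ)`.

Second, the singular vectors of a simple highest weight module form the line of `v`. A subspace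
`S` stable under the Borel subalgebra generates its whole submodule by lowering operators only.
Weighting the Cartan element `e_{kk}` by the number of indices before `k` gives an operator whose
eigenvalue is increased by every lowering operator. Take for `S` the line of `v`: the module is
the sum of that line and the span `D` of the eigenspaces of larger eigenvalue. Take for `S` the
singular vectors in `D`: if nonzero they would generate the module inside `D`, which misses `v`.
-/

open Module.End (invtSubmodule mem_invtSubmodule)

section EnvelopingAlgebra

variable {ι : Type} [DecidableEq ι] {p : ι → ℕ}

lemma gen_mul_gen (i j k l : ι) :
    gen p i j * gen p k l = ((-1 : ℂ) ^ ((p i + p j) * (p k + p l))) • (gen p k l * gen p i j)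
      + ((if j = k then gen p i l else 0)
        - ((-1 : ℂ) ^ ((p i + p j) * (p k + p l))) • (if l = i then gen p k j else 0)) := by
  have h := RingQuot.mkAlgHom_rel ℂ (glRel.basic (p := p) i j k l)
  simp only [map_sub, map_mul, map_smul, apply_ite (RingQuot.mkAlgHom ℂ (glRel ι p)),
    map_zero] at h
  exact sub_eq_iff_eq_add'.1 h

lemma gen_self_mul_gen (k i j : ι) :
    gen p k k * gen p i j = gen p i j * gen p k k
      + ((if k = i then gen p i j else 0) - (if k = j then gen p i j else 0)) := by
  have hsign : (-1 : ℂ) ^ ((p k + p k) * (p i + p j)) = 1 :=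
    (Even.mul_right ⟨p k, rfl⟩ _).neg_one_pow
  rw [gen_mul_gen, hsign, one_smul, one_smul]
  rcases eq_or_ne k i with rfl | hki <;> rcases eq_or_ne k j with rfl | hkj <;>
    simp_all [eq_comm]

variable {L : Type*} [AddCommGroup L] [Module ℂ L] {ρ : UEA ι p →ₐ[ℂ] Module.End ℂ L}

lemma mem_invtSubmodule_of_forall_gen {N : Submodule ℂ L}
    (hN : ∀ i j, N ∈ invtSubmodule (ρ (gen p i j))) (u : UEA ι p) :
    N ∈ invtSubmodule (ρ u) := by
  obtain ⟨u, rfl⟩ := RingQuot.mkAlgHom_surjective ℂ (glRel ι p) u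
  induction u using FreeAlgebra.induction with
  | grade0 c =>
    intro x hx
    simpa only [AlgHom.commutes, Submodule.mem_comap, Module.algebraMap_end_apply]
      using N.smul_mem c hx
  | grade1 y => exact hN y.1 y.2
  | mul u u' hu hu' =>
    simp only [map_mul]
    exact fun x hx => hu (hu' hx)
  | add u u' hu hu' =>
    simp only [map_add]
    exact fun x hx => N.add_mem (hu hx) (hu' hx)

end EnvelopingAlgebra

section SingularVectors

variable {ι : Type} [DecidableEq ι] {p : ι → ℕ} {L : Type*} [AddCommGroup L] [Module ℂ L]
  (ρ : UEA ι p →ₐ[ℂ] Module.End ℂ L) (r : ι → ι → Prop)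

/-- The space of singular vectors of a representation of `gl` with index set ordered by `r`: the
vectors killed by all raising operators `e_{ij}`, `r i j`. The highest weight vectors are the
nonzero ones that are moreover weight vectors. -/
def singularVectors : Submodule ℂ L :=
  ⨅ (i) (j) (_ : r i j), LinearMap.ker (ρ (gen p i j))

variable {ρ r} in
lemma mem_singularVectors {x : L} :
    x ∈ singularVectors ρ r ↔ ∀ i j, r i j → ρ (gen p i j) x = 0 := by
  simp only [singularVectors, Submodule.mem_iInf, LinearMap.mem_ker]

lemma singularVectors_mem_invtSubmodule_gen_self (k : ι) :
    singularVectors ρ r ∈ invtSubmodule (ρ (gen p k k)) := by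
  intro x hx
  rw [Submodule.mem_comap, mem_singularVectors]
  intro i j hij
  have h := congrArg (fun u => ρ u x) (gen_self_mul_gen (p := p) k i j)
  simpa [mem_singularVectors.1 hx i j hij, apply_ite (fun u => ρ u x)] using h.symm

/-- The smallest subspace that contains `S` and is invariant under the lowering operators
`e_{ij}`, `r j i`. -/
def loweringClosure (S : Submodule ℂ L) : Submodule ℂ L :=
  sInf {N | S ≤ N ∧ ∀ i j, r j i → N ∈ invtSubmodule (ρ (gen p i j))}

variable {ρ r}

lemma le_loweringClosure (S : Submodule ℂ L) : S ≤ loweringClosure ρ r S :=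
  le_sInf fun _ hN => hN.1

lemma loweringClosure_le {S N : Submodule ℂ L} (hSN : S ≤ N)
    (hN : ∀ i j, r j i → N ∈ invtSubmodule (ρ (gen p i j))) : loweringClosure ρ r S ≤ N :=
  sInf_le ⟨hSN, hN⟩

lemma loweringClosure_mem_invtSubmodule_of_rel (S : Submodule ℂ L) {i j : ι} (hij : r j i) :
    loweringClosure ρ r S ∈ invtSubmodule (ρ (gen p i j)) :=
  fun _ hx => Submodule.mem_sInf.2 fun _ hN => hN.2 i j hij (Submodule.mem_sInf.1 hx _ hN)

/- The vectors of the closure that every `e_{ij}` keeps in the closure form a subspace invariant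
under lowering operators: a lowering operator can be moved past `e_{ij}` at the price of a linear
combination of generators. -/
lemma loweringClosure_mem_invtSubmodule {S : Submodule ℂ L}
    (hS : ∀ i j, ¬ r j i → S ∈ invtSubmodule (ρ (gen p i j))) (u : UEA ι p) :
    loweringClosure ρ r S ∈ invtSubmodule (ρ u) := by
  refine mem_invtSubmodule_of_forall_gen (fun i j => ?_) u
  set C := loweringClosure ρ r S
  let N : Submodule ℂ L := C ⊓ ⨅ (i) (j), C.comap (ρ (gen p i j))
  have mem_N {x : L} : x ∈ N ↔ x ∈ C ∧ ∀ i j, ρ (gen p i j) x ∈ C := by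
    simp only [N, Submodule.mem_inf, Submodule.mem_iInf, Submodule.mem_comap]
  have lower {i j : ι} (hij : r j i) {x : L} (hx : x ∈ C) : ρ (gen p i j) x ∈ C :=
    loweringClosure_mem_invtSubmodule_of_rel S hij hx
  have hSN : S ≤ N := fun x hx => mem_N.2 ⟨le_loweringClosure S hx, fun i j => by
    by_cases hij : r j i
    · exact lower hij (le_loweringClosure S hx)
    · exact le_loweringClosure S (hS i j hij hx)⟩
  have hN (k l : ι) (hkl : r l k) : N ∈ invtSubmodule (ρ (gen p k l)) := by
    intro x hx
    obtain ⟨-, hx⟩ := mem_N.1 hx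
    refine mem_N.2 ⟨hx k l, fun i j => ?_⟩
    rw [← Module.End.mul_apply, ← map_mul, gen_mul_gen]
    simp only [map_add, map_sub, map_smul, map_mul, LinearMap.add_apply, LinearMap.sub_apply,
      LinearMap.smul_apply, Module.End.mul_apply]
    refine C.add_mem (C.smul_mem _ (lower hkl (hx i j))) (C.sub_mem ?_ (C.smul_mem _ ?_)) <;>
      split_ifs <;> simp [hx]
  exact fun x hx => (mem_N.1 (loweringClosure_le hSN hN hx)).2 i j

lemma eq_top_of_borel_invariant_le
    (hsimple : ∀ N : Submodule ℂ L, (∀ u, N ∈ invtSubmodule (ρ u)) → N = ⊥ ∨ N = ⊤)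
    {S T : Submodule ℂ L} (hS0 : S ≠ ⊥)
    (hS : ∀ i j, ¬ r j i → S ∈ invtSubmodule (ρ (gen p i j))) (hST : S ≤ T)
    (hT : ∀ i j, r j i → T ∈ invtSubmodule (ρ (gen p i j))) : T = ⊤ := by
  rcases hsimple _ (loweringClosure_mem_invtSubmodule hS) with h | h
  · exact absurd (eq_bot_mono (le_loweringClosure S) h) hS0
  · exact eq_top_mono (loweringClosure_le hST hT) h

end SingularVectors

/-- The number of indices before `i`; every lowering operator `e_{ij}`, `r j i`, passes from an
index `j` to a deeper one. -/
def indexDepth {ι : Type*} (r : ι → ι → Prop) (i : ι) : ℕ := {j | r j i}.ncard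

lemma indexDepth_lt {ι : Type*} [Finite ι] {r : ι → ι → Prop} [IsStrictOrder ι r] {i j : ι}
    (hij : r i j) : indexDepth r i < indexDepth r j :=
  Set.ncard_lt_ncard ⟨fun _ hk => _root_.trans hk hij, fun h => irrefl i (h hij)⟩

section DepthGrading

variable {ι : Type} [Fintype ι] [DecidableEq ι] {p : ι → ℕ} {L : Type*} [AddCommGroup L]
  [Module ℂ L] (ρ : UEA ι p →ₐ[ℂ] Module.End ℂ L) (r : ι → ι → Prop)

/-- The operator `∑ k, depth(k) e_{kk}`, whose eigenspaces grade a representation so that `e_{ij}`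
has degree `depth(i) - depth(j)`. -/
def depthOp : Module.End ℂ L := ∑ k, (indexDepth r k : ℂ) • ρ (gen p k k)

/-- The sum of the eigenspaces of the depth operator with eigenvalues `μ + 1, μ + 2, …`. -/
def deeperThan (μ : ℂ) : Submodule ℂ L :=
  ⨆ k : ℕ, (depthOp ρ r).eigenspace (μ + (k + 1))

lemma depthOp_mul_gen (i j : ι) :
    depthOp ρ r * ρ (gen p i j) = ρ (gen p i j) * depthOp ρ r
      + ((indexDepth r i : ℂ) - indexDepth r j) • ρ (gen p i j) := by
  simp only [depthOp, Finset.sum_mul, Finset.mul_sum, smul_mul_assoc, mul_smul_comm, ← map_mul,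
    gen_self_mul_gen, map_add, map_sub, apply_ite ρ, map_zero, smul_add, smul_sub, smul_ite,
    smul_zero, Finset.sum_add_distrib, Finset.sum_sub_distrib, Finset.sum_ite_eq',
    Finset.mem_univ, if_true, sub_smul]

variable {ρ r}

lemma gen_apply_mem_eigenspace_depthOp {μ : ℂ} {x : L} (hx : x ∈ (depthOp ρ r).eigenspace μ)
    (i j : ι) :
    ρ (gen p i j) x ∈ (depthOp ρ r).eigenspace (μ + ((indexDepth r i : ℂ) - indexDepth r j)) := by
  rw [Module.End.mem_eigenspace_iff] at hx ⊢
  have h := LinearMap.congr_fun (depthOp_mul_gen ρ r i j) x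
  simpa [hx, add_smul] using h

lemma mem_eigenspace_depthOp_of_weight {v : L} {lam : ι → ℂ}
    (hwt : ∀ i, ρ (gen p i i) v = lam i • v) :
    v ∈ (depthOp ρ r).eigenspace (∑ k, indexDepth r k * lam k) := by
  simp [depthOp, hwt, Finset.sum_smul, mul_smul]

lemma eigenspace_depthOp_le_deeperThan {μ : ℂ} {d : ℕ} (hd : 0 < d) :
    (depthOp ρ r).eigenspace (μ + d) ≤ deeperThan ρ r μ := by
  obtain ⟨k, rfl⟩ := Nat.exists_eq_add_of_lt hd
  simpa [deeperThan] using
    le_iSup (fun k : ℕ => (depthOp ρ r).eigenspace (μ + ((k : ℂ) + 1))) k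

lemma gen_apply_mem_deeperThan {μ : ℂ} {x : L} (hx : x ∈ (depthOp ρ r).eigenspace μ) {i j : ι}
    (hij : indexDepth r j < indexDepth r i) : ρ (gen p i j) x ∈ deeperThan ρ r μ := by
  refine eigenspace_depthOp_le_deeperThan (Nat.sub_pos_of_lt hij) ?_
  rw [Nat.cast_sub hij.le]
  exact gen_apply_mem_eigenspace_depthOp hx i j

lemma deeperThan_mem_invtSubmodule (μ : ℂ) {i j : ι} (hij : indexDepth r j ≤ indexDepth r i) :
    deeperThan ρ r μ ∈ invtSubmodule (ρ (gen p i j)) := by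
  rw [mem_invtSubmodule, deeperThan]
  refine iSup_le fun k x hx => ?_
  have h := gen_apply_mem_eigenspace_depthOp hx i j
  have hμ : μ + (k + 1) + ((indexDepth r i : ℂ) - indexDepth r j)
      = μ + (k + 1 + (indexDepth r i - indexDepth r j) : ℕ) := by
    push_cast [hij]
    ring
  rw [hμ] at h
  exact eigenspace_depthOp_le_deeperThan (by omega) h

lemma disjoint_eigenspace_deeperThan (μ : ℂ) :
    Disjoint ((depthOp ρ r).eigenspace μ) (deeperThan ρ r μ) := by
  refine (Module.End.eigenspaces_iSupIndep (depthOp ρ r) μ).mono_right (iSup_le fun k => ?_)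
  refine le_iSup₂_of_le (μ + (k + 1)) (fun h => ?_) le_rfl
  exact Nat.cast_add_one_ne_zero k (by simpa using h)

end DepthGrading

section HighestWeight

variable {ι : Type} [Fintype ι] [DecidableEq ι] {p : ι → ℕ} {L : Type*} [AddCommGroup L]
  [Module ℂ L] {ρ : UEA ι p →ₐ[ℂ] Module.End ℂ L} {r : ι → ι → Prop} [IsStrictTotalOrder ι r]

lemma singularVectors_inf_deeperThan_eq_bot
    (hsimple : ∀ N : Submodule ℂ L, (∀ u, N ∈ invtSubmodule (ρ u)) → N = ⊥ ∨ N = ⊤)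
    {μ : ℂ} (hμ : deeperThan ρ r μ ≠ ⊤) : singularVectors ρ r ⊓ deeperThan ρ r μ = ⊥ := by
  by_contra hS0
  refine hμ (eq_top_of_borel_invariant_le (r := r) hsimple hS0 (fun i j hij => ?_) inf_le_right
    fun i j hij => deeperThan_mem_invtSubmodule μ (indexDepth_lt hij).le)
  rcases trichotomous_of r i j with h | rfl | h
  · intro x hx
    simp [mem_singularVectors.1 hx.1 i j h]
  · exact invtSubmodule.inf_mem (singularVectors_mem_invtSubmodule_gen_self ρ r i)
      (deeperThan_mem_invtSubmodule μ le_rfl)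
  · exact absurd h hij

lemma span_singleton_sup_deeperThan_eq_top {v : L} {lam : ι → ℂ}
    (hsimple : ∀ N : Submodule ℂ L, (∀ u, N ∈ invtSubmodule (ρ u)) → N = ⊥ ∨ N = ⊤)
    (hv0 : v ≠ 0) (hv : v ∈ singularVectors ρ r) (hwt : ∀ i, ρ (gen p i i) v = lam i • v) :
    Submodule.span ℂ {v} ⊔ deeperThan ρ r (∑ k, indexDepth r k * lam k) = ⊤ := by
  have hline : Submodule.span ℂ {v} ≠ ⊥ := Submodule.span_singleton_eq_bot.not.2 hv0
  refine eq_top_of_borel_invariant_le (r := r) hsimple hline (fun i j hij => ?_) le_sup_left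
    fun i j hij => ?_
  · rw [mem_invtSubmodule, Submodule.span_singleton_le_iff_mem, Submodule.mem_comap]
    rcases trichotomous_of r i j with h | rfl | h
    · simp [mem_singularVectors.1 hv i j h]
    · simpa [hwt] using Submodule.smul_mem _ _ (Submodule.mem_span_singleton_self v)
    · exact absurd h hij
  · have hdepth := indexDepth_lt hij
    have hvD := gen_apply_mem_deeperThan (mem_eigenspace_depthOp_of_weight hwt) hdepth
    rw [mem_invtSubmodule]
    refine sup_le ?_ fun x hx =>
      Submodule.mem_sup_right (deeperThan_mem_invtSubmodule _ hdepth.le hx)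
    rw [Submodule.span_singleton_le_iff_mem]
    exact Submodule.mem_sup_right hvD

end HighestWeight

theorem singularVectors_eq_span_singleton {ι : Type} [Finite ι] [DecidableEq ι] {p : ι → ℕ}
    {L : Type*} [AddCommGroup L] [Module ℂ L] {ρ : UEA ι p →ₐ[ℂ] Module.End ℂ L}
    {r : ι → ι → Prop} [IsStrictTotalOrder ι r] {v : L} {lam : ι → ℂ}
    (hsimple : ∀ N : Submodule ℂ L, (∀ u, N ∈ invtSubmodule (ρ u)) → N = ⊥ ∨ N = ⊤)
    (hv0 : v ≠ 0) (hv : v ∈ singularVectors ρ r) (hwt : ∀ i, ρ (gen p i i) v = lam i • v) :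
    singularVectors ρ r = Submodule.span ℂ {v} := by
  have := Fintype.ofFinite ι
  set D := deeperThan ρ r (∑ k, indexDepth r k * lam k)
  have hline : Submodule.span ℂ {v} ≤ singularVectors ρ r := by simpa using hv
  have hD : D ≠ ⊤ := fun h => hv0 <| Submodule.disjoint_def.1 (disjoint_eigenspace_deeperThan _)
    v (mem_eigenspace_depthOp_of_weight hwt) (h ▸ Submodule.mem_top : v ∈ D)
  calc singularVectors ρ r
      = (Submodule.span ℂ {v} ⊔ D) ⊓ singularVectors ρ r := by
        rw [span_singleton_sup_deeperThan_eq_top hsimple hv0 hv hwt, top_inf_eq]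
    _ = Submodule.span ℂ {v} ⊔ D ⊓ singularVectors ρ r := sup_inf_assoc_of_le D hline
    _ = Submodule.span ℂ {v} := by
        rw [inf_comm, singularVectors_inf_deeperThan_eq_bot hsimple hD, sup_bot_eq]

section Coefficients

variable {α L : Type*} [AddCommGroup L] [Module ℂ L]

/-- The coefficient in `L` of the basis vector `y` in a tensor of `(α →₀ ℂ) ⊗ L`. -/
def tensorCoeff (y : α) : (α →₀ ℂ) ⊗[ℂ] L →ₗ[ℂ] L :=
  TensorProduct.lid ℂ L ∘ₗ (Finsupp.lapply y).rTensor L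

lemma tensorCoeff_tmul (y : α) (f : α →₀ ℂ) (u : L) : tensorCoeff y (f ⊗ₜ[ℂ] u) = f y • u := by
  simp [tensorCoeff]

lemma tensorCoeff_ext {w w' : (α →₀ ℂ) ⊗[ℂ] L} (h : ∀ y, tensorCoeff y w = tensorCoeff y w') :
    w = w' := by
  classical
  refine (TensorProduct.finsuppScalarLeft ℂ L α).injective (Finsupp.ext fun y => ?_)
  rw [TensorProduct.finsuppScalarLeft_apply, TensorProduct.finsuppScalarLeft_apply]
  exact h y

lemma tensorCoeff_rTensor {f : Module.End ℂ (α →₀ ℂ)} {y z : α} {c : ℂ}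
    (h : Finsupp.lapply z ∘ₗ f = c • Finsupp.lapply y) (w : (α →₀ ℂ) ⊗[ℂ] L) :
    tensorCoeff z (f.rTensor L w) = c • tensorCoeff y w := by
  rw [tensorCoeff, LinearMap.comp_apply, ← LinearMap.comp_apply (LinearMap.rTensor L _),
    ← LinearMap.rTensor_comp, h]
  simp [tensorCoeff]

end Coefficients

lemma update_apply_eq_update_apply_iff {κ β : Type*} [DecidableEq κ] {g : β → β} {s : Set β}
    (hg : s.InjOn g) {x y : κ → β} {i : κ} (hx : x i ∈ s) (hy : y i ∈ s) :
    Function.update x i (g (x i)) = Function.update y i (g (y i)) ↔ x = y := by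
  refine ⟨fun h => funext fun k => ?_, fun h => by rw [h]⟩
  have hk := congrFun h k
  by_cases hki : k = i
  · subst hki
    exact hg hx hy (by simpa using hk)
  · simpa [hki] using hk

section Derivations

variable {m n : ℕ}

lemma mkOp_amono {M : Type} [AddCommGroup M] [Module ℂ M] (g : FaMon m n → M) (x : FaMon m n) :
    mkOp g (amono x) = g x := by
  simp [mkOp, amono]

lemma amono_apply (x y : FaMon m n) : amono x y = if x = y then 1 else 0 := by
  simp [amono, Finsupp.single_apply]

lemma linearMap_ext_amono {M : Type*} [AddCommGroup M] [Module ℂ M] {f g : FaSp m n →ₗ[ℂ] M}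
    (h : ∀ x, f (amono x) = g (amono x)) : f = g :=
  Finsupp.lhom_ext' fun x => LinearMap.ext_ring (h x)

lemma lapply_comp_aParE {y : FaMon m n} {i : Fin m} (hy : y.1 i ≠ 0) :
    Finsupp.lapply (Function.update y.1 i (y.1 i - 1), y.2) ∘ₗ aParE i
      = (y.1 i : ℂ) • Finsupp.lapply y := by
  refine linearMap_ext_amono fun x => ?_
  by_cases hx : x.1 i = 0
  · have hxy : x ≠ y := by
      rintro rfl
      exact hy hx
    simp [aParE, mkOp_amono, amono_apply, hx, hxy]
  · have hpred : Set.InjOn (fun k => k - 1) {k : ℕ | k ≠ 0} := fun _ hk _ hl h =>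
      Nat.pred_inj (Nat.pos_of_ne_zero hk) (Nat.pos_of_ne_zero hl) h
    simp only [aParE, LinearMap.coe_comp, Function.comp_apply, mkOp_amono, map_smul,
      Finsupp.lapply_apply, amono_apply, Prod.ext_iff,
      update_apply_eq_update_apply_iff hpred hx hy, smul_eq_mul, mul_ite, mul_one, mul_zero,
      LinearMap.smul_apply]
    grind

lemma lapply_comp_aParO {y : FaMon m n} {i : Fin n} (hy : y.2 i = true) :
    Finsupp.lapply (y.1, Function.update y.2 i false) ∘ₗ aParO i
      = (-1 : ℂ) ^ cntB y.2 i • Finsupp.lapply y := by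
  refine linearMap_ext_amono fun x => ?_
  by_cases hx : x.2 i = true
  · have hfalse : Set.InjOn (fun _ => false) {true} := Set.injOn_singleton _ _
    simp only [aParO, LinearMap.coe_comp, Function.comp_apply, mkOp_amono, hx, if_true, map_smul,
      Finsupp.lapply_apply, amono_apply, Prod.ext_iff,
      update_apply_eq_update_apply_iff hfalse hx hy, smul_eq_mul, mul_ite, mul_one, mul_zero,
      LinearMap.smul_apply]
    grind
  · have hxy : x ≠ y := by
      rintro rfl
      exact hx hy
    simp [aParO, mkOp_amono, amono_apply, hx, hxy]

lemma exists_lapply_comp_aParB_emb (a : ℂ) {y : FaMon m n} (hy : y ≠ hwMon m n) :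
    ∃ (d : Ind m n) (z : FaMon m n) (c : ℂ), c ≠ 0 ∧
      Finsupp.lapply z ∘ₗ aParB a (emb d) = c • Finsupp.lapply y := by
  by_cases heven : ∃ i, y.1 i ≠ 0
  · obtain ⟨i, hi⟩ := heven
    exact ⟨Sum.inl i, _, _, Nat.cast_ne_zero.2 hi, lapply_comp_aParE hi⟩
  by_cases hodd : ∃ i, y.2 i = true
  · obtain ⟨i, hi⟩ := hodd
    exact ⟨Sum.inr i, _, _, pow_ne_zero _ (by norm_num), lapply_comp_aParO hi⟩
  push Not at heven hodd
  exact absurd (Prod.ext (funext heven) (funext fun i => Bool.eq_false_of_not_eq_true (hodd i))) hy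

lemma aParB_emb_hwMon (a : ℂ) (d : Ind m n) : aParB a (emb d) (amono (hwMon m n)) = 0 := by
  rcases d with i | i
  · change aParE i _ = 0
    simp [aParE, mkOp_amono, hwMon]
  · change aParO i _ = 0
    simp [aParO, mkOp_amono, hwMon]

lemma eq_hwMon_tmul_of_rTensor_aParB_eq_zero {L : Type*} [AddCommGroup L] [Module ℂ L] {a : ℂ}
    {w : FaSp m n ⊗[ℂ] L} (hw : ∀ d : Ind m n, (aParB a (emb d)).rTensor L w = 0) :
    w = amono (hwMon m n) ⊗ₜ[ℂ] tensorCoeff (hwMon m n) w := by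
  refine tensorCoeff_ext fun y => ?_
  rw [tensorCoeff_tmul, amono_apply]
  split_ifs with hy
  · rw [← hy, one_smul]
  · obtain ⟨d, z, c, hc, h⟩ := exists_lapply_comp_aParB_emb a (Ne.symm hy)
    have hcw := tensorCoeff_rTensor h w
    rw [hw, map_zero] at hcw
    rw [zero_smul, (smul_eq_zero.1 hcw.symm).resolve_left hc]

end Derivations

section IndexOrder

variable {m n : ℕ}

instance isStrictTotalOrder_iltI : IsStrictTotalOrder (Ind m n) iltI := by
  have h : (iltI : Ind m n → Ind m n → Prop) = Sum.Lex (· < ·) (· < ·) := by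
    ext (i | i) (j | j) <;> simp [iltI]
  rw [h]
  exact {}

lemma eq_z0_or_exists_eq_emb (i : Ind (m + 1) n) : i = z0 ∨ ∃ c : Ind m n, i = emb c := by
  rcases i with i | i
  · cases i using Fin.cases with
    | zero => exact Or.inl rfl
    | succ i => exact Or.inr ⟨Sum.inl i, rfl⟩
  · exact Or.inr ⟨Sum.inr i, rfl⟩

lemma iltI_emb_emb {c d : Ind m n} : iltI (emb c) (emb d) ↔ iltI c d := by
  cases c <;> cases d <;> simp [iltI, emb]

lemma iltI_z0_emb (d : Ind m n) : iltI z0 (emb d) := by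
  cases d <;> simp [iltI, emb, z0]

lemma not_iltI_z0 (i : Ind (m + 1) n) : ¬ iltI i z0 := by
  cases i <;> simp [iltI, z0]

end IndexOrder

namespace IsTensorRep

variable {m n : ℕ} {a r : ℂ} {L : Type} [AddCommGroup L] [Module ℂ L]
  {ρ : UEA (Ind m n) pI →ₐ[ℂ] Module.End ℂ L}
  {Θ : UEA (Ind (m + 1) n) pI →ₐ[ℂ] Module.End ℂ (FaSp m n ⊗[ℂ] L)}

lemma gen_z0_emb (hΘ : IsTensorRep a r ρ Θ) (d : Ind m n) :
    Θ (gen pI z0 (emb d)) = (aParB a (emb d)).rTensor L := by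
  ext x u : 4
  simpa [amono, aTD, aDivB, z0] using hΘ.2.2.1 d x u

lemma gen_emb_emb_hwMon_tmul (hΘ : IsTensorRep a r ρ Θ) {c d : Ind m n} (hcd : c ≠ d) (u : L) :
    Θ (gen pI (emb c) (emb d)) (amono (hwMon m n) ⊗ₜ[ℂ] u)
      = amono (hwMon m n) ⊗ₜ[ℂ] ρ (gen pI c d) u := by
  have hpar : parM (hwMon m n) = 0 := by simp [parM, cntA, hwMon]
  rw [hΘ.1]
  simp [aTD, aParB_emb_hwMon, hpar, hcd]

lemma hwMon_tmul_mem_singularVectors_iff (hΘ : IsTensorRep a r ρ Θ) {u : L} :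
    amono (hwMon m n) ⊗ₜ[ℂ] u ∈ singularVectors Θ iltI ↔ u ∈ singularVectors ρ iltI := by
  have raise {c d : Ind m n} (hcd : iltI c d) :=
    hΘ.gen_emb_emb_hwMon_tmul (ne_of_irrefl hcd) u
  simp only [mem_singularVectors]
  refine ⟨fun h c d hcd => ?_, fun h i j hij => ?_⟩
  · have h0 := congrArg (tensorCoeff (hwMon m n)) (h _ _ (iltI_emb_emb.2 hcd))
    simpa [raise hcd, tensorCoeff_tmul, amono_apply] using h0
  · obtain rfl | ⟨d, rfl⟩ := eq_z0_or_exists_eq_emb j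
    · exact absurd hij (not_iltI_z0 i)
    obtain rfl | ⟨c, rfl⟩ := eq_z0_or_exists_eq_emb i
    · rw [hΘ.gen_z0_emb, LinearMap.rTensor_tmul, aParB_emb_hwMon, TensorProduct.zero_tmul]
    · rw [raise (iltI_emb_emb.1 hij), h c d (iltI_emb_emb.1 hij), TensorProduct.tmul_zero]

theorem mem_singularVectors_iff (hΘ : IsTensorRep a r ρ Θ) {w : FaSp m n ⊗[ℂ] L} :
    w ∈ singularVectors Θ iltI ↔
      ∃ u ∈ singularVectors ρ iltI, w = amono (hwMon m n) ⊗ₜ[ℂ] u := by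
  refine ⟨fun hw => ?_, ?_⟩
  · have hw0 := eq_hwMon_tmul_of_rTensor_aParB_eq_zero (w := w) fun d => by
      rw [← hΘ.gen_z0_emb]
      exact mem_singularVectors.1 hw _ _ (iltI_z0_emb d)
    exact ⟨_, hΘ.hwMon_tmul_mem_singularVectors_iff.1 (hw0 ▸ hw), hw0⟩
  · rintro ⟨u, hu, rfl⟩
    exact hΘ.hwMon_tmul_mem_singularVectors_iff.2 hu

end IsTensorRep

/-- Proposition 4.1.  The vector `t_0^a ⊗ v_λ` is a highest weight vector of
the `U(gl(m+1|n))`-module `F_a ⊗ L(λ)`, and it is the only one up to scaling. -/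
theorem stmt5 (m n : ℕ) (a r : ℂ) (lam : Ind m n → ℂ) (HW : SimpleHW m n lam)
    (Θ : UEA (Ind (m+1) n) pI →ₐ[ℂ] Module.End ℂ (FaSp m n ⊗[ℂ] HW.L))
    (hΘ : IsTensorRep a r HW.ρ Θ) :
    (∀ i j : Ind (m+1) n, iltI i j →
      Θ (gen pI i j) (amono (hwMon m n) ⊗ₜ[ℂ] HW.v) = 0) ∧
    (∀ w : FaSp m n ⊗[ℂ] HW.L, w ≠ 0 →
      (∀ i j : Ind (m+1) n, iltI i j → Θ (gen pI i j) w = 0) →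
      ∃ c : ℂ, w = c • (amono (hwMon m n) ⊗ₜ[ℂ] HW.v)) := by
  have hv : HW.v ∈ singularVectors HW.ρ iltI := mem_singularVectors.2 HW.hw
  have hline : singularVectors HW.ρ iltI = Submodule.span ℂ {HW.v} :=
    singularVectors_eq_span_singleton (fun N hN => HW.simple N fun u _ hx => hN u hx)
      HW.v_ne hv HW.hwt
  refine ⟨mem_singularVectors.1 (hΘ.mem_singularVectors_iff.2 ⟨HW.v, hv, rfl⟩), fun w _ hw => ?_⟩
  obtain ⟨u, hu, rfl⟩ := hΘ.mem_singularVectors_iff.1 (mem_singularVectors.2 hw)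
  obtain ⟨c, rfl⟩ := Submodule.mem_span_singleton.1 (hline ▸ hu)
  exact ⟨c, TensorProduct.tmul_smul c _ _⟩
end
end
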